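/- For generic limit-periodic V : ℤ → ℝ (i.e., for every V in some dense Gδ subset of LP(ℤ,ℝ)), the spectrum of the discrete Schrödinger operator H_{λV^{⊛k}} is a Cantor set of zero Hausdorff dimension for every λ ≠ 0 and every k ∈ ℕ. -/

import Mathlib

/-!
Since `H_W - E` is symmetric, `E` lies outside the spectrum iff `H_W - E` is bounded below, and
lower bounds are stable under small changes of the potential, the coupling and the energy.

*Opening gaps.* For a periodic potential, a transfer matrix over one period with trace outside
`[-2, 2]` gives a lower bound. Near any periodic potential there is a periodic one with this
property at a prescribed energy, coupling and repetition number: otherwise all products of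
transfer matrices over perturbed periods form a semigroup of matrices of determinant one and trace
in `[-2, 2]`, which forces any two of its elliptic elements to commute, and varying a single
letter contradicts this. By compactness, finitely many periodic potentials near the given one
suffice for all energies, all couplings with `1 / K ≤ |λ| ≤ K` and all `k ≤ K`.

*Thin spectrum.* Glue stretches of length proportional to `R` of these finitely many potentials
into one periodic potential. At every energy some stretch belongs to a potential with a gap there,
so approximate solutions are exponentially small in `R` at its centre. Cutting at the centres
decouples the operator into copies of a finite box, and the spectrum lies in exponentially small
neighbourhoods of the box eigenvalues, whose number grows only linearly in `R`. Nearby potentials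
have the same cover.

*Genericity.* Hence, for each `K`, the potentials with a cover of order `K` contain a dense open
set. By Baire the intersection of these sets is a dense `Gδ`, and for its members the covers force
Hausdorff dimension zero, in particular empty interior. The spectrum is always compact and
nonempty. It has no isolated points: an isolated point would be an eigenvalue with an at most two-
dimensional eigenspace, but far translates of an eigenvector along almost periods are almost
eigenvectors that are tiny at the two sites `0, 1` whose values determine an eigenvector.
-/

open Set MeasureTheory BoundedContinuousFunction

noncomputable section

/-- ℓ²(ℤ; ℝ). -/
abbrev Ell2 : Type := lp (fun _ : ℤ => ℝ) 2

/-- Spectrum of the discrete Schrödinger operator `H_W = Δ + W` on `ℓ²(ℤ)`: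
`E` lies in the spectrum iff `H_W - E` is not a linear bijection of `ℓ²(ℤ)`
(for bounded `W`, by the open mapping theorem this is equivalent to `H_W - E`
not being boundedly invertible). -/
def SchrodingerSpectrum (W : ℤ → ℝ) : Set ℝ :=
  {E : ℝ | ¬ ∃ T : Ell2 ≃ₗ[ℝ] Ell2,
      ∀ f : Ell2, ∀ n : ℤ,
        (T f) n = f (n - 1) + f (n + 1) + (W n - E) * f n}

/-- A Cantor set of zero Hausdorff dimension: nonempty, compact, without isolated
points, with empty interior, and of Hausdorff dimension zero. -/
def IsZeroDimCantor (s : Set ℝ) : Prop :=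
  s.Nonempty ∧ IsCompact s ∧ Preperfect s ∧ interior s = ∅ ∧ dimH s = 0

/-- Periodic bounded sequences. -/
def IsPeriodicSeq {α : Type*} [PseudoMetricSpace α] (W : ℤ →ᵇ α) : Prop :=
  ∃ q : ℕ, 0 < q ∧ ∀ n : ℤ, W (n + q) = W n

/-- The limit-periodic functions `ℤ → ℝ`: uniform limits of periodic functions. -/
def LPZ : Set (ℤ →ᵇ ℝ) := closure {W : ℤ →ᵇ ℝ | IsPeriodicSeq W}

/-- The `k`-fold repetition of `V`: `V^{⊛k}(n) = V(⌊n/k⌋)`. -/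
def repeatPot (V : ℤ → ℝ) (k : ℕ) : ℤ → ℝ :=
  fun n => V (Int.fdiv n k)

/-! ### Schrödinger operators on `ℓ²(ℤ)` -/

/-- `ℓ²(ℤ; 𝕜)` for `𝕜 = ℝ` or `ℂ`. The spectrum is defined over `ℝ`, but the continuous functional
calculus lives over `ℂ`. -/
abbrev LTwo (𝕜 : Type*) [RCLike 𝕜] : Type _ := lp (fun _ : ℤ => 𝕜) 2

/-- `A` is bounded below by `c`. Approximate eigenvectors are handled through this condition: for
self-adjoint `A` it holds with some `c > 0` iff `A` is invertible. -/
def BoundedBelow {𝕜 E F : Type*} [NontriviallyNormedField 𝕜] [NormedAddCommGroup E]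
    [NormedSpace 𝕜 E] [NormedAddCommGroup F] [NormedSpace 𝕜 F] (A : E →L[𝕜] F) (c : ℝ) : Prop :=
  ∀ f, c * ‖f‖ ≤ ‖A f‖

section BoundedBelow

variable {𝕜 E F : Type*} [RCLike 𝕜] [NormedAddCommGroup E] [NormedAddCommGroup F]

lemma BoundedBelow.mono [NormedSpace 𝕜 E] [NormedSpace 𝕜 F] {A : E →L[𝕜] F} {c d : ℝ}
    (h : BoundedBelow A c) (hdc : d ≤ c) : BoundedBelow A d :=
  fun f => (mul_le_mul_of_nonneg_right hdc (norm_nonneg f)).trans (h f)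

lemma BoundedBelow.of_norm_sub_le [NormedSpace 𝕜 E] [NormedSpace 𝕜 F] {A B : E →L[𝕜] F}
    {c d : ℝ} (h : BoundedBelow A c) (hAB : ‖A - B‖ ≤ d) : BoundedBelow B (c - d) := by
  intro f
  have hdiff : ‖A f - B f‖ ≤ d * ‖f‖ := (A - B).le_of_opNorm_le hAB f
  linarith [h f, norm_sub_norm_le (A f) (B f)]

lemma boundedBelow_algebraMap_sub [NormedSpace 𝕜 E] (A : E →L[𝕜] E) (z : 𝕜) :
    BoundedBelow (algebraMap 𝕜 (E →L[𝕜] E) z - A) (‖z‖ - ‖A‖) := by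
  intro f
  have hdiff := norm_sub_norm_le (z • f) (A f)
  rw [norm_smul] at hdiff
  have hA := A.le_opNorm f
  calc (‖z‖ - ‖A‖) * ‖f‖ ≤ ‖z • f - A f‖ := by linarith
    _ = _ := by simp [Algebra.algebraMap_eq_smul_one]

variable [InnerProductSpace 𝕜 E] [CompleteSpace E]

/-- A lower bound makes the range closed, and its orthogonal complement is the kernel. -/
lemma isUnit_iff_exists_boundedBelow {A : E →L[𝕜] E} (hA : IsSelfAdjoint A) :
    IsUnit A ↔ ∃ c > 0, BoundedBelow A c := by
  rw [ContinuousLinearMap.isUnit_iff_bijective]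
  constructor
  · intro hbij
    obtain ⟨-, K, hK⟩ := (ContinuousLinearMap.bijective_iff_dense_range_and_antilipschitz A).1 hbij
    refine ⟨(K + 1 : ℝ)⁻¹, by positivity, fun f => ?_⟩
    rw [inv_mul_le_iff₀ (by positivity)]
    have := ZeroHomClass.bound_of_antilipschitz A hK f
    linarith [norm_nonneg (A f)]
  · rintro ⟨c, hc, h⟩
    rw [ContinuousLinearMap.bijective_iff_dense_range_and_antilipschitz]
    constructor
    · rw [Submodule.topologicalClosure_eq_top_iff]
      refine (LinearMap.IsSymmetric.orthogonal_range hA.isSymmetric).trans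
        (LinearMap.ker_eq_bot'.2 fun f hf => norm_le_zero_iff.1 ?_)
      have := h f
      rw [show A f = 0 from hf, norm_zero] at this
      exact nonpos_of_mul_nonpos_right this hc
    · refine ⟨⟨c⁻¹, by positivity⟩, A.antilipschitz_of_bound fun f => ?_⟩
      change ‖f‖ ≤ c⁻¹ * ‖A f‖
      rw [← div_eq_inv_mul, le_div_iff₀' hc]
      exact h f

end BoundedBelow

section Operators

variable {𝕜 𝕜' : Type*} [RCLike 𝕜] [RCLike 𝕜']

lemma hasSum_norm_sq (f : LTwo 𝕜) : HasSum (fun n => ‖f n‖ ^ 2) (‖f‖ ^ 2) := by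
  simpa using lp.hasSum_norm (p := 2) (by norm_num) f

lemma hasSum_norm_sq_add (f : LTwo 𝕜) (a : ℤ) :
    HasSum (fun n => ‖f (n + a)‖ ^ 2) (‖f‖ ^ 2) :=
  (Equiv.hasSum_iff (f := fun n => ‖f n‖ ^ 2) (Equiv.addRight a)).2 (hasSum_norm_sq f)

lemma memℓp_comp_add (f : LTwo 𝕜) (a : ℤ) : Memℓp (fun n => f (n + a)) 2 :=
  memℓp_gen (by simpa using (hasSum_norm_sq_add f a).summable)

variable (𝕜) in
/-- Translation `f ↦ f (· + a)` on `ℓ²(ℤ; 𝕜)`. -/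
def shiftIsometry (a : ℤ) : LTwo 𝕜 →ₗᵢ[𝕜] LTwo 𝕜 where
  toFun f := ⟨fun n => f (n + a), memℓp_comp_add f a⟩
  map_add' _ _ := rfl
  map_smul' _ _ := rfl
  norm_map' f := by
    let g : LTwo 𝕜 := ⟨fun n => f (n + a), memℓp_comp_add f a⟩
    have hg : HasSum (fun n => ‖f (n + a)‖ ^ 2) (‖g‖ ^ 2) := hasSum_norm_sq g
    exact (sq_eq_sq₀ (norm_nonneg g) (norm_nonneg f)).1 (hg.unique (hasSum_norm_sq_add f a))

variable (𝕜) in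
/-- Translation `f ↦ f (· + a)` as an element of the algebra of bounded operators. -/
def shiftOp (a : ℤ) : LTwo 𝕜 →L[𝕜] LTwo 𝕜 := (shiftIsometry 𝕜 a).toContinuousLinearMap

@[simp]
lemma shiftOp_apply (a : ℤ) (f : LTwo 𝕜) (n : ℤ) : shiftOp 𝕜 a f n = f (n + a) := rfl

@[simp]
lemma norm_shiftOp_apply (a : ℤ) (f : LTwo 𝕜) : ‖shiftOp 𝕜 a f‖ = ‖f‖ :=
  (shiftIsometry 𝕜 a).norm_map f

lemma shiftOp_mul_shiftOp (a b : ℤ) : shiftOp 𝕜 a * shiftOp 𝕜 b = shiftOp 𝕜 (a + b) := by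
  ext f n
  simp [add_assoc]

lemma shiftOp_zero : shiftOp 𝕜 0 = 1 := by
  ext f n
  simp

variable (𝕜) in
lemma norm_ofReal_smul_id_le (W : ℤ →ᵇ ℝ) (n : ℤ) :
    ‖(W n : 𝕜) • ContinuousLinearMap.id 𝕜 𝕜‖ ≤ ‖W‖ := by
  simpa [norm_smul] using W.norm_coe_le_norm n

variable (𝕜) in
/-- Multiplication by bounded real sequences on `ℓ²(ℤ; 𝕜)`. -/
def mulOp : (ℤ →ᵇ ℝ) →ₐ[ℝ] (LTwo 𝕜 →L[𝕜] LTwo 𝕜) where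
  toFun W := lp.mapCLM 2 (fun n => (W n : 𝕜) • ContinuousLinearMap.id 𝕜 𝕜) (norm_nonneg W)
    (norm_ofReal_smul_id_le 𝕜 W)
  map_one' := by ext; simp
  map_mul' _ _ := by ext; simp [mul_assoc]
  map_zero' := by ext; simp
  map_add' _ _ := by ext; simp [add_mul]
  commutes' r := by
    ext f n
    simp [Algebra.algebraMap_eq_smul_one]

@[simp]
lemma mulOp_apply (W : ℤ →ᵇ ℝ) (f : LTwo 𝕜) (n : ℤ) : mulOp 𝕜 W f n = (W n : 𝕜) * f n := by
  simp [mulOp]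

lemma norm_mulOp_le (W : ℤ →ᵇ ℝ) : ‖mulOp 𝕜 W‖ ≤ ‖W‖ :=
  lp.norm_mapCLM_le 2 _ (norm_nonneg W) (norm_ofReal_smul_id_le 𝕜 W)

/-- Translation `W ↦ W (· + a)` of bounded sequences. -/
def translatePot (a : ℤ) : (ℤ →ᵇ ℝ) →+* (ℤ →ᵇ ℝ) where
  toFun W := W.compContinuous ⟨(· + a), continuous_of_discreteTopology⟩
  map_one' := rfl
  map_mul' _ _ := rfl
  map_zero' := rfl
  map_add' _ _ := rfl

@[simp]
lemma translatePot_apply (a : ℤ) (W : ℤ →ᵇ ℝ) (n : ℤ) : translatePot a W n = W (n + a) := rfl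

lemma shiftOp_mul_mulOp (a : ℤ) (W : ℤ →ᵇ ℝ) :
    shiftOp 𝕜 a * mulOp 𝕜 W = mulOp 𝕜 (translatePot a W) * shiftOp 𝕜 a := by
  ext f n
  simp

variable (𝕜) in
/-- The Schrödinger operator `H_W` on `ℓ²(ℤ; 𝕜)`. -/
def schrodinger (W : ℤ →ᵇ ℝ) : LTwo 𝕜 →L[𝕜] LTwo 𝕜 :=
  shiftOp 𝕜 (-1) + shiftOp 𝕜 1 + mulOp 𝕜 W

lemma schrodinger_apply (W : ℤ →ᵇ ℝ) (f : LTwo 𝕜) (n : ℤ) :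
    schrodinger 𝕜 W f n = f (n - 1) + f (n + 1) + (W n : 𝕜) * f n := by
  simp [schrodinger, sub_eq_add_neg]

lemma inner_shiftOp (a : ℤ) (f g : LTwo 𝕜) :
    inner 𝕜 (shiftOp 𝕜 a f) g = inner 𝕜 f (shiftOp 𝕜 (-a) g) := by
  rw [lp.inner_eq_tsum, lp.inner_eq_tsum, ← (Equiv.addRight (-a)).tsum_eq]
  simp

lemma inner_mulOp (W : ℤ →ᵇ ℝ) (f g : LTwo 𝕜) :
    inner 𝕜 (mulOp 𝕜 W f) g = inner 𝕜 f (mulOp 𝕜 W g) := by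
  simp only [lp.inner_eq_tsum, mulOp_apply, RCLike.inner_apply, map_mul, RCLike.conj_ofReal]
  exact tsum_congr fun n => by ring

lemma isSelfAdjoint_schrodinger (W : ℤ →ᵇ ℝ) : IsSelfAdjoint (schrodinger 𝕜 W) := by
  refine LinearMap.IsSymmetric.isSelfAdjoint fun f g => ?_
  simp only [schrodinger, ContinuousLinearMap.coe_coe, _root_.add_apply, inner_add_left,
    inner_add_right, inner_shiftOp, inner_mulOp, neg_neg]
  ring

lemma schrodinger_sub (W V : ℤ →ᵇ ℝ) :
    schrodinger 𝕜 W - schrodinger 𝕜 V = mulOp 𝕜 (W - V) := by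
  simp [schrodinger]

lemma schrodinger_sub_algebraMap (W : ℤ →ᵇ ℝ) (E : ℝ) :
    schrodinger 𝕜 (W - algebraMap ℝ _ E) = schrodinger 𝕜 W - algebraMap ℝ _ E := by
  simp [schrodinger, add_sub_assoc]

lemma norm_schrodinger_le (W : ℤ →ᵇ ℝ) : ‖schrodinger 𝕜 W‖ ≤ 2 + ‖W‖ := by
  have hshift (a : ℤ) : ‖shiftOp 𝕜 a‖ ≤ 1 :=
    ContinuousLinearMap.opNorm_le_bound _ zero_le_one fun f => by simp
  calc ‖schrodinger 𝕜 W‖ ≤ ‖shiftOp 𝕜 (-1)‖ + ‖shiftOp 𝕜 1‖ + ‖mulOp 𝕜 W‖ := norm_add₃_le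
    _ ≤ 1 + 1 + ‖W‖ := add_le_add_three (hshift _) (hshift _) (norm_mulOp_le W)
    _ = 2 + ‖W‖ := by ring

lemma BoundedBelow.schrodinger_of_norm_sub_le {W V : ℤ →ᵇ ℝ} {c d : ℝ}
    (h : BoundedBelow (schrodinger 𝕜 W) c) (hWV : ‖W - V‖ ≤ d) :
    BoundedBelow (schrodinger 𝕜 V) (c - d) :=
  h.of_norm_sub_le (by rw [schrodinger_sub]; exact (norm_mulOp_le _).trans hWV)

lemma boundedBelow_schrodinger_translatePot {W : ℤ →ᵇ ℝ} {c : ℝ}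
    (h : BoundedBelow (schrodinger 𝕜 W) c) (a : ℤ) :
    BoundedBelow (schrodinger 𝕜 (translatePot a W)) c := by
  intro f
  have hcomm : schrodinger 𝕜 W (shiftOp 𝕜 (-a) f) =
      shiftOp 𝕜 (-a) (schrodinger 𝕜 (translatePot a W) f) := by
    ext n
    simp [schrodinger_apply, sub_add_eq_add_sub, add_right_comm]
  simpa [hcomm] using h (shiftOp 𝕜 (-a) f)

/-! ### Real and complex scalars -/

/-- A real-linear map between the scalar fields, applied entrywise. -/
def mapLTwo (T : 𝕜 →L[ℝ] 𝕜') : LTwo 𝕜 →L[ℝ] LTwo 𝕜' :=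
  lp.mapCLM 2 (fun _ => T) (norm_nonneg T) fun _ => le_rfl

@[simp]
lemma mapLTwo_apply (T : 𝕜 →L[ℝ] 𝕜') (f : LTwo 𝕜) (n : ℤ) : mapLTwo T f n = T (f n) := by
  simp [mapLTwo]

lemma schrodinger_mapLTwo (T : 𝕜 →L[ℝ] 𝕜') (W : ℤ →ᵇ ℝ) (f : LTwo 𝕜) :
    schrodinger 𝕜' W (mapLTwo T f) = mapLTwo T (schrodinger 𝕜 W f) := by
  ext n
  simp [schrodinger_apply, ← RCLike.real_smul_eq_coe_mul]

lemma norm_mapLTwo_ofReal (f : LTwo ℝ) : ‖mapLTwo (RCLike.ofRealCLM (K := 𝕜)) f‖ = ‖f‖ := by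
  refine (sq_eq_sq₀ (norm_nonneg _) (norm_nonneg _)).1 ((hasSum_norm_sq _).unique ?_)
  simpa using hasSum_norm_sq f

lemma norm_sq_mapLTwo_re_add_im (f : LTwo 𝕜) :
    ‖mapLTwo RCLike.reCLM f‖ ^ 2 + ‖mapLTwo RCLike.imCLM f‖ ^ 2 = ‖f‖ ^ 2 := by
  refine ((hasSum_norm_sq _).add (hasSum_norm_sq _)).unique ?_
  simpa [← RCLike.norm_sq_eq_def, ← RCLike.normSq_eq_def', RCLike.normSq_apply, sq] using
    hasSum_norm_sq f

lemma boundedBelow_schrodinger_real_iff {W : ℤ →ᵇ ℝ} {c : ℝ} (hc : 0 ≤ c) :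
    BoundedBelow (schrodinger ℝ W) c ↔ BoundedBelow (schrodinger 𝕜 W) c := by
  constructor
  · intro h f
    refine (pow_le_pow_iff_left₀ (by positivity) (norm_nonneg _) two_ne_zero).1 ?_
    have hsq (g : LTwo ℝ) : c ^ 2 * ‖g‖ ^ 2 ≤ ‖schrodinger ℝ W g‖ ^ 2 := by
      rw [← mul_pow]
      exact pow_le_pow_left₀ (by positivity) (h g) 2
    calc (c * ‖f‖) ^ 2
        = c ^ 2 * ‖mapLTwo RCLike.reCLM f‖ ^ 2 + c ^ 2 * ‖mapLTwo RCLike.imCLM f‖ ^ 2 := by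
          rw [mul_pow, ← norm_sq_mapLTwo_re_add_im, mul_add]
      _ ≤ _ := add_le_add (hsq _) (hsq _)
      _ = ‖schrodinger 𝕜 W f‖ ^ 2 := by
          rw [schrodinger_mapLTwo, schrodinger_mapLTwo, norm_sq_mapLTwo_re_add_im]
  · intro h f
    simpa only [schrodinger_mapLTwo, norm_mapLTwo_ofReal] using h (mapLTwo RCLike.ofRealCLM f)

lemma notMem_schrodingerSpectrum_iff (W : ℤ →ᵇ ℝ) (E : ℝ) :
    E ∉ SchrodingerSpectrum W ↔ IsUnit (schrodinger ℝ (W - algebraMap ℝ _ E)) := by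
  rw [ContinuousLinearMap.isUnit_iff_bijective]
  simp only [SchrodingerSpectrum, mem_ofPred_eq, not_not]
  constructor
  · rintro ⟨T, hT⟩
    convert T.bijective
    ext f n
    simp [hT, schrodinger_apply]
  · intro h
    exact ⟨LinearEquiv.ofBijective (schrodinger ℝ (W - algebraMap ℝ _ E)).toLinearMap h,
      fun f n => schrodinger_apply _ f n⟩

lemma notMem_schrodingerSpectrum_iff_exists_boundedBelow (W : ℤ →ᵇ ℝ) (E : ℝ) :
    E ∉ SchrodingerSpectrum W ↔
      ∃ c > 0, BoundedBelow (schrodinger 𝕜 (W - algebraMap ℝ _ E)) c := by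
  rw [notMem_schrodingerSpectrum_iff, isUnit_iff_exists_boundedBelow (isSelfAdjoint_schrodinger _)]
  exact exists_congr fun c => and_congr_right fun hc => boundedBelow_schrodinger_real_iff hc.le

lemma schrodingerSpectrum_eq_spectrum (W : ℤ →ᵇ ℝ) :
    SchrodingerSpectrum W = spectrum ℝ (schrodinger 𝕜 W) := by
  ext E
  rw [← not_iff_not, notMem_schrodingerSpectrum_iff_exists_boundedBelow (𝕜 := 𝕜),
    spectrum.notMem_iff, ← isUnit_iff_exists_boundedBelow (isSelfAdjoint_schrodinger _),
    schrodinger_sub_algebraMap, IsUnit.sub_iff]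

lemma isCompact_schrodingerSpectrum (W : ℤ →ᵇ ℝ) : IsCompact (SchrodingerSpectrum W) := by
  rw [schrodingerSpectrum_eq_spectrum (𝕜 := ℝ)]
  exact spectrum.isCompact _

end Operators

/-! ### The spectrum is nonempty and, for limit-periodic potentials, perfect -/

section GeneralizedInverse

variable {H : Type*} [NormedAddCommGroup H] [InnerProductSpace ℂ H]

lemma apply_sub_eq_zero_of_mul_mul_eq_self {A G : H →L[ℂ] H} (hG : A * G * A = A) (f : H) :
    A (f - G (A f)) = 0 := by
  rw [map_sub, sub_eq_zero]
  exact (DFunLike.congr_fun hG f).symm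

variable [CompleteSpace H]

lemma spectrum_nonempty_of_isSelfAdjoint [Nontrivial H] {A : H →L[ℂ] H} (hA : IsSelfAdjoint A) :
    (spectrum ℝ A).Nonempty :=
  ContinuousFunctionalCalculus.spectrum_nonempty A hA

/-- The generalized inverse is `x ↦ 1 / x`, extended by `0` at `0`, applied to `A`. -/
lemma exists_mul_mul_eq_self_of_isolated_zero {A : H →L[ℂ] H} (hA : IsSelfAdjoint A) {δ : ℝ}
    (hδ : 0 < δ) (hgap : ∀ x ∈ spectrum ℝ A, x = 0 ∨ δ ≤ |x|) :
    ∃ G : H →L[ℂ] H, A * G * A = A := by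
  let g : ℝ → ℝ := fun x => x / max (x ^ 2) (δ ^ 2)
  have hpos (x : ℝ) : 0 < max (x ^ 2) (δ ^ 2) := lt_max_of_lt_right (by positivity)
  have hg : Continuous g := Continuous.div (by fun_prop) (by fun_prop) fun x => (hpos x).ne'
  have hgen : ∀ x ∈ spectrum ℝ A, x * g x * x = x := by
    intro x hx
    rcases hgap x hx with rfl | hδx
    · simp
    · have hx0 : x ≠ 0 := abs_pos.1 (hδ.trans_le hδx)
      have hmax : max (x ^ 2) (δ ^ 2) = x ^ 2 :=
        max_eq_left (sq_abs x ▸ pow_le_pow_left₀ hδ.le hδx 2)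
      simp only [g, hmax]
      field_simp
  refine ⟨cfc g A, ?_⟩
  calc A * cfc g A * A = cfc (fun x => x * g x * x) A := by
        rw [cfc_mul (fun x => x * g x) (fun x => x) A (by fun_prop) (by fun_prop),
          cfc_mul (fun x => x) g A (by fun_prop) (by fun_prop), cfc_id' ℝ A]
    _ = cfc (fun x => x) A := cfc_congr hgen
    _ = A := cfc_id' ℝ A

lemma exists_ne_zero_of_not_isUnit {A G : H →L[ℂ] H} (hA : IsSelfAdjoint A)
    (hG : A * G * A = A) (hunit : ¬ IsUnit A) : ∃ u ≠ 0, A u = 0 := by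
  by_contra! hker
  refine hunit ((isUnit_iff_exists_boundedBelow hA).2 ⟨(‖G‖ + 1)⁻¹, by positivity, fun f => ?_⟩)
  have hinv : f = G (A f) := by
    by_contra hne
    exact hker _ (sub_ne_zero.2 hne) (apply_sub_eq_zero_of_mul_mul_eq_self hG f)
  rw [inv_mul_le_iff₀ (by positivity)]
  calc ‖f‖ = ‖G (A f)‖ := by rw [← hinv]
    _ ≤ ‖G‖ * ‖A f‖ := G.le_opNorm _
    _ ≤ (‖G‖ + 1) * ‖A f‖ := by gcongr; linarith

end GeneralizedInverse

lemma schrodingerSpectrum_nonempty (W : ℤ →ᵇ ℝ) : (SchrodingerSpectrum W).Nonempty := by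
  have : Nontrivial (LTwo ℂ) := ⟨⟨lp.single 2 0 1, 0, fun h => by
    simpa using congrArg (fun f : LTwo ℂ => f 0) h⟩⟩
  rw [schrodingerSpectrum_eq_spectrum (𝕜 := ℂ)]
  exact spectrum_nonempty_of_isSelfAdjoint (isSelfAdjoint_schrodinger W)

section Perfect

variable {𝕜 : Type*} [RCLike 𝕜]

lemma eq_zero_of_schrodinger_eq_zero {W : ℤ →ᵇ ℝ} {u : LTwo 𝕜} (hu : schrodinger 𝕜 W u = 0)
    (h0 : u 0 = 0) (h1 : u 1 = 0) : u = 0 := by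
  have hrec (n : ℤ) : u (n - 1) + u (n + 1) + (W n : 𝕜) * u n = 0 := by
    rw [← schrodinger_apply, hu]
    rfl
  have hpair (n : ℤ) : u n = 0 ∧ u (n + 1) = 0 := by
    induction n with
    | zero => exact ⟨h0, h1⟩
    | succ n ih => exact ⟨ih.2, by simpa [ih.1, ih.2] using hrec (n + 1)⟩
    | pred n ih => exact ⟨by simpa [ih.1, ih.2] using hrec (-n), by simpa using ih.1⟩
  ext n
  exact (hpair n).1

lemma exists_norm_le_of_schrodinger_eq_zero (W : ℤ →ᵇ ℝ) :
    ∃ κ : ℝ, 0 ≤ κ ∧ ∀ u : LTwo 𝕜, schrodinger 𝕜 W u = 0 → ‖u‖ ≤ κ * max ‖u 0‖ ‖u 1‖ := by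
  let ev : LinearMap.ker (schrodinger 𝕜 W).toLinearMap →ₗ[𝕜] 𝕜 × 𝕜 :=
    { toFun := fun u => ((u : LTwo 𝕜) 0, (u : LTwo 𝕜) 1)
      map_add' := fun _ _ => rfl
      map_smul' := fun _ _ => rfl }
  have hker : LinearMap.ker ev = ⊥ := LinearMap.ker_eq_bot'.2 fun u hu =>
    Subtype.ext (eq_zero_of_schrodinger_eq_zero u.2 (Prod.mk.inj hu).1 (Prod.mk.inj hu).2)
  have := FiniteDimensional.of_injective ev (LinearMap.ker_eq_bot.1 hker)
  obtain ⟨K, -, hK⟩ := LinearMap.exists_antilipschitzWith ev hker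
  exact ⟨K, K.2, fun u hu => ZeroHomClass.bound_of_antilipschitz ev hK ⟨u, hu⟩⟩

lemma exists_norm_le_of_mul_mul_eq_self {W : ℤ →ᵇ ℝ} {G : LTwo ℂ →L[ℂ] LTwo ℂ}
    (hG : schrodinger ℂ W * G * schrodinger ℂ W = schrodinger ℂ W) :
    ∃ C > 0, ∀ v : LTwo ℂ, ‖v‖ ≤ C * (max ‖v 0‖ ‖v 1‖ + ‖schrodinger ℂ W v‖) := by
  obtain ⟨κ, hκ, hker⟩ := exists_norm_le_of_schrodinger_eq_zero (𝕜 := ℂ) W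
  refine ⟨κ * (1 + ‖G‖) + ‖G‖ + 1, by positivity, fun v => ?_⟩
  set r := G (schrodinger ℂ W v)
  have hr : ‖r‖ ≤ ‖G‖ * ‖schrodinger ℂ W v‖ := G.le_opNorm _
  have hsite (n : ℤ) : ‖(v - r) n‖ ≤ ‖v n‖ + ‖r‖ :=
    (norm_sub_le (v n) (r n)).trans
      (add_le_add_right (lp.norm_apply_le_norm two_ne_zero r n) _)
  have hmax : max ‖(v - r) 0‖ ‖(v - r) 1‖ ≤ max ‖v 0‖ ‖v 1‖ + ‖r‖ :=
    max_le ((hsite 0).trans (by gcongr; exact le_max_left _ _))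
      ((hsite 1).trans (by gcongr; exact le_max_right _ _))
  have hm : 0 ≤ max ‖v 0‖ ‖v 1‖ := le_max_of_le_left (norm_nonneg _)
  calc ‖v‖ = ‖(v - r) + r‖ := by rw [sub_add_cancel]
    _ ≤ κ * (max ‖v 0‖ ‖v 1‖ + ‖r‖) + ‖r‖ := (norm_add_le _ _).trans (add_le_add_left
        ((hker _ (apply_sub_eq_zero_of_mul_mul_eq_self hG v)).trans (by gcongr)) _)
    _ ≤ κ * (max ‖v 0‖ ‖v 1‖ + ‖G‖ * ‖schrodinger ℂ W v‖) + ‖G‖ * ‖schrodinger ℂ W v‖ := by gcongr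
    _ ≤ (κ * (1 + ‖G‖) + ‖G‖ + 1) * (max ‖v 0‖ ‖v 1‖ + ‖schrodinger ℂ W v‖) := by
        have := norm_nonneg (schrodinger ℂ W v)
        have : 0 ≤ κ * ‖G‖ * max ‖v 0‖ ‖v 1‖ + κ * ‖schrodinger ℂ W v‖ + ‖G‖ * max ‖v 0‖ ‖v 1‖ :=
          by positivity
        linarith

lemma exists_norm_translate_le (u : LTwo 𝕜) {N : ℕ} (hN : 0 < N) {ε : ℝ} (hε : 0 < ε) :
    ∃ z : ℤ, ‖u (0 + z * N)‖ ≤ ε ∧ ‖u (1 + z * N)‖ ≤ ε := by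
  have hsmall : ∀ᶠ n : ℤ in Filter.cofinite, ‖u n‖ ^ 2 < ε ^ 2 :=
    (hasSum_norm_sq u).summable.tendsto_cofinite_zero.eventually (gt_mem_nhds (by positivity))
  have hfar (a : ℤ) : ∀ᶠ z : ℤ in Filter.cofinite, ‖u (a + z * N)‖ ≤ ε := by
    have hinj : Function.Injective fun z : ℤ => a + z * N := fun x y hxy => by
      simpa [hN.ne'] using hxy
    filter_upwards [hinj.tendsto_cofinite.eventually hsmall] with z hz
    exact (pow_le_pow_iff_left₀ (norm_nonneg _) hε.le two_ne_zero).1 hz.le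
  exact ((hfar 0).and (hfar 1)).exists

lemma schrodinger_shiftOp (W : ℤ →ᵇ ℝ) {u : LTwo 𝕜} (hu : schrodinger 𝕜 W u = 0) (a : ℤ) :
    schrodinger 𝕜 W (shiftOp 𝕜 a u) = mulOp 𝕜 (W - translatePot a W) (shiftOp 𝕜 a u) := by
  have htranslate : schrodinger 𝕜 (translatePot a W) (shiftOp 𝕜 a u) = 0 := by
    ext n
    have hn : schrodinger 𝕜 W u (n + a) = 0 := by rw [hu]; rfl
    simpa [schrodinger_apply, sub_add_eq_add_sub, add_right_comm] using hn
  rw [← schrodinger_sub, _root_.sub_apply, htranslate, sub_zero]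

/-- If `0` is isolated in the spectrum then it is an eigenvalue with an at most two-dimensional
eigenspace. Far translates of an eigenvector are almost eigenvectors, hence close to the eigenspace,
but they are tiny at the sites `0, 1` that determine eigenvectors. -/
lemma not_isolated_zero_spectrum_schrodinger {W : ℤ →ᵇ ℝ}
    (hW : ∀ ε > 0, ∃ N : ℕ, 0 < N ∧ ∀ z : ℤ, ‖translatePot (z * N) W - W‖ ≤ ε)
    (h0 : 0 ∈ spectrum ℝ (schrodinger ℂ W)) {δ : ℝ} (hδ : 0 < δ) :
    ¬ ∀ x ∈ spectrum ℝ (schrodinger ℂ W), x = 0 ∨ δ ≤ |x| := by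
  intro hgap
  obtain ⟨G, hG⟩ := exists_mul_mul_eq_self_of_isolated_zero (isSelfAdjoint_schrodinger W) hδ hgap
  obtain ⟨u, hu0, hu⟩ := exists_ne_zero_of_not_isUnit (isSelfAdjoint_schrodinger W) hG
    ((spectrum.zero_mem_iff ℝ).1 h0)
  obtain ⟨C, hC, hbound⟩ := exists_norm_le_of_mul_mul_eq_self hG
  have hupos : 0 < ‖u‖ := norm_pos_iff.2 hu0
  obtain ⟨N, hN, hper⟩ := hW (1 / (4 * C)) (by positivity)
  obtain ⟨z, hz0, hz1⟩ := exists_norm_translate_le u hN (ε := 1 / (4 * C) * ‖u‖) (by positivity)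
  set v := shiftOp ℂ (z * N) u
  have hv : ‖v‖ = ‖u‖ := norm_shiftOp_apply _ u
  have hHv : ‖schrodinger ℂ W v‖ ≤ 1 / (4 * C) * ‖u‖ := by
    rw [schrodinger_shiftOp W hu, ← hv]
    exact ContinuousLinearMap.le_of_opNorm_le _
      ((norm_mulOp_le _).trans (norm_sub_rev _ W ▸ hper z)) v
  have : ‖u‖ ≤ ‖u‖ / 2 := by
    calc ‖u‖ = ‖v‖ := hv.symm
      _ ≤ C * (max ‖v 0‖ ‖v 1‖ + ‖schrodinger ℂ W v‖) := hbound v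
      _ ≤ C * (1 / (4 * C) * ‖u‖ + 1 / (4 * C) * ‖u‖) := by
          gcongr
          exact max_le hz0 hz1
      _ = ‖u‖ / 2 := by
          field_simp
          norm_num
  linarith

lemma preperfect_schrodingerSpectrum {W : ℤ →ᵇ ℝ}
    (hW : ∀ ε > 0, ∃ N : ℕ, 0 < N ∧ ∀ z : ℤ, ‖translatePot (z * N) W - W‖ ≤ ε) :
    Preperfect (SchrodingerSpectrum W) := by
  intro E hE
  rw [accPt_iff_nhds]
  by_contra! hiso
  obtain ⟨U, hU, hiso⟩ := hiso
  obtain ⟨δ, hδ, hball⟩ := Metric.mem_nhds_iff.1 hU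
  have hmem (x : ℝ) : x ∈ spectrum ℝ (schrodinger ℂ (W - algebraMap ℝ _ E)) ↔
      E + x ∈ SchrodingerSpectrum W := by
    rw [schrodingerSpectrum_eq_spectrum (𝕜 := ℂ), schrodinger_sub_algebraMap, spectrum.mem_iff,
      spectrum.mem_iff, map_add]
    congr! 2
    abel
  refine not_isolated_zero_spectrum_schrodinger (W := W - algebraMap ℝ _ E) (fun ε hε => ?_)
    ((hmem 0).2 (by simpa using hE)) hδ fun x hx => ?_
  · obtain ⟨N, hN, hper⟩ := hW ε hε
    refine ⟨N, hN, fun z => ?_⟩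
    have hconst : translatePot (z * N) (algebraMap ℝ _ E) = algebraMap ℝ _ E := rfl
    rw [map_sub, hconst, sub_sub_sub_cancel_right]
    exact hper z
  · by_contra! hx2
    have := hiso (E + x) ⟨hball (by simpa using hx2.2), (hmem x).1 hx⟩
    exact hx2.1 (by linarith)

lemma exists_norm_translatePot_sub_le {W : ℤ →ᵇ ℝ} (hW : W ∈ LPZ) {ε : ℝ} (hε : 0 < ε) :
    ∃ N : ℕ, 0 < N ∧ ∀ z : ℤ, ‖translatePot (z * N) W - W‖ ≤ ε := by
  obtain ⟨V, ⟨N, hN, hV⟩, hVW⟩ := Metric.mem_closure_iff.1 hW (ε / 2) (by positivity)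
  refine ⟨N, hN, fun z => (norm_le hε.le).2 fun n => ?_⟩
  have hclose (m : ℤ) : |W m - V m| ≤ ε / 2 :=
    ((W - V).norm_coe_le_norm m).trans (dist_eq_norm W V ▸ hVW.le)
  have hVper : V (n + z * N) = V n := (show Function.Periodic V N from hV).int_mul z n
  have htri := abs_sub_le (W (n + z * N)) (V n) (W n)
  rw [abs_sub_comm (V n)] at htri
  calc |W (n + z * N) - W n| ≤ |W (n + z * N) - V (n + z * N)| + |W n - V n| := by rwa [hVper]
    _ ≤ ε := by linarith [hclose (n + z * N), hclose n]

end Perfect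

/-! ### Transfer matrices -/

section TransferMatrices

open scoped MatrixGroups

/-- The one-step transfer matrix: `u n = x * u (n + 1) - u (n + 2)` passes from the sites
`n + 1, n + 2` to the sites `n, n + 1`. -/
def stepMatrix {R : Type*} [CommRing R] (x : R) : SL(2, R) :=
  ⟨!![x, -1; 1, 0], by simp [Matrix.det_fin_two]⟩

@[simp]
lemma coe_stepMatrix {R : Type*} [CommRing R] (x : R) :
    (stepMatrix x : Matrix (Fin 2) (Fin 2) R) = !![x, -1; 1, 0] := rfl

lemma map_stepMatrix {R S : Type*} [CommRing R] [CommRing S] (φ : R →+* S) (x : R) :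
    Matrix.SpecialLinearGroup.map φ (stepMatrix x) = stepMatrix (φ x) := by
  ext i j
  fin_cases i <;> fin_cases j <;> simp

/-- The transfer matrices of `H_W` over `j` sites, as matrices of bounded functions of the last
site: `cocycle W j n` is `stepMatrix (-W (n - j + 1)) * ⋯ * stepMatrix (-W n)`. -/
def cocycle (W : ℤ →ᵇ ℝ) : ℕ → SL(2, ℤ →ᵇ ℝ)
  | 0 => 1
  | j + 1 => Matrix.SpecialLinearGroup.map (translatePot (-1)) (cocycle W j) * stepMatrix (-W)

lemma cocycle_succ (W : ℤ →ᵇ ℝ) (j : ℕ) : cocycle W (j + 1) =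
    Matrix.SpecialLinearGroup.map (translatePot (-1)) (cocycle W j) * stepMatrix (-W) := rfl

lemma cocycle_succ_eq_stepMatrix_mul (W : ℤ →ᵇ ℝ) (j : ℕ) :
    cocycle W (j + 1) = stepMatrix (-translatePot (-j) W) * cocycle W j := by
  induction j with
  | zero =>
    have : translatePot 0 W = W := by ext; simp
    simp [cocycle, this]
  | succ j ih =>
    have : translatePot (-1) (translatePot (-j) W) = translatePot (-(j + 1 : ℕ)) W := by
      ext n
      simp only [translatePot_apply, Nat.cast_add, Nat.cast_one]
      ring_nf
    rw [cocycle_succ, ih, map_mul, map_stepMatrix, map_neg, this, mul_assoc, ← cocycle_succ, ih]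

lemma map_translatePot_cocycle {W : ℤ →ᵇ ℝ} {a : ℤ} (hW : translatePot a W = W) (j : ℕ) :
    Matrix.SpecialLinearGroup.map (translatePot a) (cocycle W j) = cocycle W j := by
  have hcomm (V : ℤ →ᵇ ℝ) :
      translatePot a (translatePot (-1) V) = translatePot (-1) (translatePot a V) := by
    ext n
    simp [add_right_comm]
  induction j with
  | zero => simp [cocycle]
  | succ j ih =>
    rw [cocycle_succ, map_mul, map_stepMatrix, map_neg, hW]
    congr 1
    conv_rhs => rw [← ih]
    ext i i'
    simp [hcomm]

lemma translatePot_trace_cocycle {W : ℤ →ᵇ ℝ} {N : ℕ} (hW : translatePot (-N) W = W) :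
    translatePot (-1) (cocycle W N).1.trace = (cocycle W N).1.trace := by
  have hconj : Matrix.SpecialLinearGroup.map (translatePot (-1)) (cocycle W N) =
      stepMatrix (-W) * cocycle W N * (stepMatrix (-W))⁻¹ := by
    have hsucc := cocycle_succ_eq_stepMatrix_mul W N
    rwa [hW, cocycle_succ, ← eq_mul_inv_iff_mul_eq] at hsucc
  calc translatePot (-1) (cocycle W N).1.trace
      = (Matrix.SpecialLinearGroup.map (translatePot (-1)) (cocycle W N)).1.trace := by
        simp [Matrix.trace_fin_two]
    _ = ((stepMatrix (-W))⁻¹ * (stepMatrix (-W) * cocycle W N)).1.trace := by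
        rw [hconj, Matrix.SpecialLinearGroup.coe_mul, Matrix.trace_mul_comm,
          ← Matrix.SpecialLinearGroup.coe_mul]
    _ = (cocycle W N).1.trace := by rw [inv_mul_cancel_left]

lemma trace_cocycle_eq_algebraMap {W : ℤ →ᵇ ℝ} {N : ℕ} (hW : translatePot (-N) W = W) :
    (cocycle W N).1.trace = algebraMap ℝ _ ((cocycle W N).1.trace (N - 1)) := by
  have hper : Function.Periodic (cocycle W N).1.trace (-1) :=
    DFunLike.congr_fun (translatePot_trace_cocycle hW)
  ext n
  have := hper.int_mul (N - 1 - n) (N - 1)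
  rw [Int.cast_id, show (N - 1 + (N - 1 - n) * -1 : ℤ) = n by ring] at this
  simpa using this

section LeftIdeal

variable {𝕜 : Type*} [RCLike 𝕜]

lemma shiftOp_mul_sub_mem_span {W a b : ℤ →ᵇ ℝ} {X : LTwo 𝕜 →L[𝕜] LTwo 𝕜}
    (hX : X - (mulOp 𝕜 a + mulOp 𝕜 b * shiftOp 𝕜 1) ∈ Ideal.span {schrodinger 𝕜 W}) :
    shiftOp 𝕜 (-1) * X - (mulOp 𝕜 (translatePot (-1) b - translatePot (-1) a * W) +
      mulOp 𝕜 (-translatePot (-1) a) * shiftOp 𝕜 1) ∈ Ideal.span {schrodinger 𝕜 W} := by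
  have hspan := add_mem (Ideal.mul_mem_left _ (shiftOp 𝕜 (-1)) hX)
    (Ideal.mul_mem_left _ (mulOp 𝕜 (translatePot (-1) a))
      (Ideal.mem_span_singleton_self (schrodinger 𝕜 W)))
  convert hspan using 1
  have hcancel : shiftOp 𝕜 (-1) * shiftOp 𝕜 1 = 1 := by
    rw [shiftOp_mul_shiftOp, neg_add_cancel, shiftOp_zero]
  have hb : shiftOp 𝕜 (-1) * (mulOp 𝕜 b * shiftOp 𝕜 1) = mulOp 𝕜 (translatePot (-1) b) := by
    rw [← mul_assoc, shiftOp_mul_mulOp, mul_assoc, hcancel, mul_one]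
  rw [mul_sub, mul_add, hb, shiftOp_mul_mulOp, schrodinger]
  simp only [map_sub, map_mul, map_neg]
  noncomm_ring

lemma shiftOp_sub_cocycle_mem_span (W : ℤ →ᵇ ℝ) (j : ℕ) :
    shiftOp 𝕜 (-j) - (mulOp 𝕜 ((cocycle W j).1 0 0) + mulOp 𝕜 ((cocycle W j).1 0 1) * shiftOp 𝕜 1)
        ∈ Ideal.span {schrodinger 𝕜 W} ∧
      shiftOp 𝕜 (1 - j) -
          (mulOp 𝕜 ((cocycle W j).1 1 0) + mulOp 𝕜 ((cocycle W j).1 1 1) * shiftOp 𝕜 1)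
        ∈ Ideal.span {schrodinger 𝕜 W} := by
  induction j with
  | zero => simp [cocycle, shiftOp_zero]
  | succ j ih =>
    have h0 := shiftOp_mul_sub_mem_span ih.1
    have h1 := shiftOp_mul_sub_mem_span ih.2
    rw [shiftOp_mul_shiftOp] at h0 h1
    have hleft (i : Fin 2) : (cocycle W (j + 1)).1 i 0 =
        translatePot (-1) ((cocycle W j).1 i 1) - translatePot (-1) ((cocycle W j).1 i 0) * W := by
      simp only [cocycle_succ, Matrix.SpecialLinearGroup.coe_mul,
        Matrix.SpecialLinearGroup.map_apply_coe, RingHom.mapMatrix_apply, coe_stepMatrix,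
        Matrix.mul_apply, Matrix.map_apply, Matrix.of_apply, Matrix.cons_val', Matrix.cons_val_zero,
        Matrix.cons_val_one, Matrix.cons_val_fin_one, Fin.sum_univ_two]
      ring
    have hright (i : Fin 2) :
        (cocycle W (j + 1)).1 i 1 = -translatePot (-1) ((cocycle W j).1 i 0) := by
      simp only [cocycle_succ, Matrix.SpecialLinearGroup.coe_mul,
        Matrix.SpecialLinearGroup.map_apply_coe, RingHom.mapMatrix_apply, coe_stepMatrix,
        Matrix.mul_apply, Matrix.map_apply, Matrix.of_apply, Matrix.cons_val', Matrix.cons_val_zero,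
        Matrix.cons_val_one, Matrix.cons_val_fin_one, Fin.sum_univ_two]
      ring
    rw [hleft, hleft, hright, hright]
    constructor
    · convert h0 using 3
      push_cast
      ring
    · convert h1 using 3
      push_cast
      ring

lemma shiftOp_cayleyHamilton_mem_span {W : ℤ →ᵇ ℝ} {N : ℕ} (hW : translatePot (-N) W = W) :
    shiftOp 𝕜 (-N) * shiftOp 𝕜 (-N) - mulOp 𝕜 (cocycle W N).1.trace * shiftOp 𝕜 (-N) + 1 ∈
      Ideal.span {schrodinger 𝕜 W} := by
  obtain ⟨hX, hY⟩ := shiftOp_sub_cocycle_mem_span (𝕜 := 𝕜) W N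
  have hentry (i j : Fin 2) : translatePot (-N) ((cocycle W N).1 i j) = (cocycle W N).1 i j :=
    congrArg (fun M : SL(2, ℤ →ᵇ ℝ) => M.1 i j) (map_translatePot_cocycle hW N)
  have hdet := (cocycle W N).2
  rw [Matrix.det_fin_two] at hdet
  rw [Matrix.trace_fin_two]
  set p := (cocycle W N).1 0 0
  set q := (cocycle W N).1 0 1
  set r := (cocycle W N).1 1 0
  set s := (cocycle W N).1 1 1
  set X := shiftOp 𝕜 (-N)
  set Y := shiftOp 𝕜 (1 - N)
  have hXp : X * mulOp 𝕜 p = mulOp 𝕜 p * X := by rw [shiftOp_mul_mulOp, hentry]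
  have hXq : X * (mulOp 𝕜 q * shiftOp 𝕜 1) = mulOp 𝕜 q * Y := by
    rw [← mul_assoc, shiftOp_mul_mulOp, hentry, mul_assoc, shiftOp_mul_shiftOp, neg_add_eq_sub]
  have hone : (1 : LTwo 𝕜 →L[𝕜] LTwo 𝕜) = mulOp 𝕜 p * mulOp 𝕜 s - mulOp 𝕜 q * mulOp 𝕜 r := by
    rw [← map_mul, ← map_mul, ← map_sub, hdet, map_one]
  have hcomm (a b : ℤ →ᵇ ℝ) : mulOp 𝕜 a * mulOp 𝕜 b = mulOp 𝕜 b * mulOp 𝕜 a := by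
    rw [← map_mul, mul_comm, map_mul]
  have hspan := add_mem (sub_mem (Ideal.mul_mem_left _ X hX) (Ideal.mul_mem_left _ (mulOp 𝕜 s) hX))
    (Ideal.mul_mem_left _ (mulOp 𝕜 q) hY)
  convert hspan using 1
  rw [mul_sub, mul_add, hXp, hXq, hone, map_add]
  simp only [mul_sub, mul_add, ← mul_assoc, hcomm s p, hcomm s q, add_mul]
  abel

lemma exists_boundedBelow_of_two_lt_abs_trace {W : ℤ →ᵇ ℝ} {N : ℕ}
    (hW : translatePot (-N) W = W) (htrace : 2 < |(cocycle W N).1.trace (N - 1)|) :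
    ∃ c > 0, BoundedBelow (schrodinger 𝕜 W) c := by
  set t := (cocycle W N).1.trace (N - 1)
  obtain ⟨K, hK⟩ := Ideal.mem_span_singleton'.1 (shiftOp_cayleyHamilton_mem_span (𝕜 := 𝕜) hW)
  rw [trace_cocycle_eq_algebraMap hW, AlgHom.commutes] at hK
  refine ⟨(|t| - 2) / (‖K‖ + 1), div_pos (by linarith) (by positivity), fun f => ?_⟩
  rw [div_mul_eq_mul_div, div_le_iff₀' (by positivity)]
  set S := shiftOp 𝕜 (-N)
  have hKf : K (schrodinger 𝕜 W f) = S (S f) - t • S f + f := by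
    simpa [Algebra.algebraMap_eq_smul_one] using DFunLike.congr_fun hK f
  have hexpand : t • S f = S (S f) + f - K (schrodinger 𝕜 W f) := by
    rw [hKf]
    abel
  have hnorm : |t| * ‖f‖ ≤ ‖f‖ + ‖f‖ + ‖K (schrodinger 𝕜 W f)‖ := by
    calc |t| * ‖f‖ = ‖t • S f‖ := by rw [norm_smul, norm_shiftOp_apply, Real.norm_eq_abs]
      _ ≤ ‖S (S f)‖ + ‖f‖ + ‖K (schrodinger 𝕜 W f)‖ := by
          rw [hexpand]
          exact (norm_sub_le _ _).trans (by gcongr; exact norm_add_le _ _)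
      _ = _ := by rw [norm_shiftOp_apply, norm_shiftOp_apply]
  have hKle := K.le_opNorm (schrodinger 𝕜 W f)
  linarith [norm_nonneg (schrodinger 𝕜 W f)]

end LeftIdeal

end TransferMatrices

/-! ### Hyperbolic words -/

section HyperbolicWords

open scoped MatrixGroups
open Polynomial hiding C

/-- The corner entry dominates in degree. Multiplication by a step matrix with a linear letter
preserves this and raises the degree, so the trace and the corner entry are not constant. -/
def DominantCorner {R : Type*} [CommRing R] (M : SL(2, R[X])) : Prop :=
  (M.1 0 1).degree < (M.1 0 0).degree ∧ (M.1 1 0).degree < (M.1 0 0).degree ∧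
    (M.1 1 1).degree ≤ (M.1 0 0).degree

namespace DominantCorner
variable {R : Type*} [CommRing R] [IsDomain R] {M : SL(2, R[X])} {p : R[X]}

lemma one : DominantCorner (1 : SL(2, R[X])) := by
  simp [DominantCorner]

lemma degree_stepMatrix_mul_zero_zero (hM : DominantCorner M) (hp : p.degree = 1) :
    ((stepMatrix p * M).1 0 0).degree = (M.1 0 0).degree + 1 := by
  have hmul : (p * M.1 0 0).degree = (M.1 0 0).degree + 1 := by rw [degree_mul, hp, add_comm]
  have hentry : (stepMatrix p * M).1 0 0 = p * M.1 0 0 - M.1 1 0 := by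
    simp [Matrix.mul_apply, sub_eq_add_neg]
  rw [hentry, degree_sub_eq_left_of_degree_lt, hmul]
  rw [hmul]
  exact hM.2.1.trans_le (le_add_of_nonneg_right zero_le_one)

lemma degree_lt_stepMatrix_mul_zero_zero (hM : DominantCorner M) (hp : p.degree = 1) :
    (M.1 0 0).degree < ((stepMatrix p * M).1 0 0).degree := by
  rw [hM.degree_stepMatrix_mul_zero_zero hp, Polynomial.degree_eq_natDegree]
  · exact_mod_cast Nat.lt_succ_self _
  · exact Polynomial.degree_ne_bot.1 hM.1.ne_bot

lemma stepMatrix_mul (hM : DominantCorner M) (hp : p.degree = 1) :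
    DominantCorner (stepMatrix p * M) := by
  have hlt := hM.degree_lt_stepMatrix_mul_zero_zero hp
  have h01 : (stepMatrix p * M).1 0 1 = p * M.1 0 1 - M.1 1 1 := by
    simp [Matrix.mul_apply, sub_eq_add_neg]
  have h10 : (stepMatrix p * M).1 1 0 = M.1 0 0 := by simp [Matrix.mul_apply]
  have h11 : (stepMatrix p * M).1 1 1 = M.1 0 1 := by simp [Matrix.mul_apply]
  refine ⟨?_, by rwa [h10], by rw [h11]; exact (hM.1.trans hlt).le⟩
  rw [h01]
  refine (degree_sub_le _ _).trans_lt (max_lt ?_ (hM.2.2.trans_lt hlt))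
  rw [hM.degree_stepMatrix_mul_zero_zero hp, degree_mul, hp, add_comm]
  exact WithBot.add_lt_add_right (by simp) hM.1

lemma degree_trace_stepMatrix_mul (hM : DominantCorner M) (hp : p.degree = 1) :
    0 < (stepMatrix p * M).1.trace.degree := by
  have hlt := hM.degree_lt_stepMatrix_mul_zero_zero hp
  have h11 : (stepMatrix p * M).1 1 1 = M.1 0 1 := by simp [Matrix.mul_apply]
  rw [Matrix.trace_fin_two, degree_add_eq_left_of_degree_lt (by rw [h11]; exact hM.1.trans hlt)]
  exact (zero_le_degree_iff.2 (degree_ne_bot.1 hM.1.ne_bot)).trans_lt hlt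

end DominantCorner

/-- The transfer matrix of a word in which every letter is repeated `k` times. -/
def wordMatrix {R : Type*} [CommRing R] (k : ℕ) (l : List R) : SL(2, R) :=
  (l.map fun a => stepMatrix a ^ k).prod

section WordMatrix

variable {R S : Type*} [CommRing R] [CommRing S]

lemma wordMatrix_cons (k : ℕ) (a : R) (l : List R) :
    wordMatrix k (a :: l) = stepMatrix a ^ k * wordMatrix k l := by
  simp [wordMatrix]

lemma wordMatrix_append (k : ℕ) (l l' : List R) :
    wordMatrix k (l ++ l') = wordMatrix k l * wordMatrix k l' := by
  simp [wordMatrix]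

lemma map_wordMatrix (φ : R →+* S) (k : ℕ) (l : List R) :
    Matrix.SpecialLinearGroup.map φ (wordMatrix k l) = wordMatrix k (l.map φ) := by
  simp [wordMatrix, map_list_prod, Function.comp_def, map_stepMatrix]

lemma trace_map (φ : R →+* S) (M : SL(2, R)) :
    (Matrix.SpecialLinearGroup.map φ M).1.trace = φ M.1.trace := by
  simp [Matrix.trace_fin_two]

lemma map_evalRingHom_stepMatrix (a t : R) :
    Matrix.SpecialLinearGroup.map (evalRingHom t) (stepMatrix (X + Polynomial.C a)) =
      stepMatrix (t + a) := by
  simp [map_stepMatrix]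

lemma DominantCorner.stepMatrix_pow_mul [IsDomain R] {M : SL(2, R[X])} (hM : DominantCorner M)
    (a : R) (k : ℕ) : DominantCorner (stepMatrix (X + Polynomial.C a) ^ k * M) := by
  induction k with
  | zero => simpa using hM
  | succ k ih =>
    rw [pow_succ', mul_assoc]
    exact ih.stepMatrix_mul (degree_X_add_C a)

lemma dominantCorner_wordMatrix [IsDomain R] (k : ℕ) (l : List R) :
    DominantCorner (wordMatrix k (l.map fun a => X + Polynomial.C a)) := by
  induction l with
  | nil => exact DominantCorner.one
  | cons a l ih =>
    rw [List.map_cons, wordMatrix_cons]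
    exact ih.stepMatrix_pow_mul a k

lemma degree_trace_wordMatrix_pos [IsDomain R] {k : ℕ} (hk : k ≠ 0) {l : List R} (hl : l ≠ []) :
    0 < (wordMatrix k (l.map fun a => X + Polynomial.C a)).1.trace.degree := by
  obtain ⟨k, rfl⟩ := Nat.exists_eq_succ_of_ne_zero hk
  obtain ⟨a, l, rfl⟩ := List.exists_cons_of_ne_nil hl
  rw [List.map_cons, wordMatrix_cons, pow_succ', mul_assoc]
  exact ((dominantCorner_wordMatrix _ l).stepMatrix_pow_mul a k).degree_trace_stepMatrix_mul
    (degree_X_add_C a)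

lemma degree_stepMatrix_pow_pos [IsDomain R] {k : ℕ} (hk : k ≠ 0) (a : R) :
    0 < ((stepMatrix (X + Polynomial.C a) ^ k).1 0 0).degree := by
  obtain ⟨k, rfl⟩ := Nat.exists_eq_succ_of_ne_zero hk
  have hM : DominantCorner (stepMatrix (X + Polynomial.C a) ^ k) := by
    simpa using DominantCorner.one.stepMatrix_pow_mul a k
  rw [pow_succ']
  exact (zero_le_degree_iff.2 (degree_ne_bot.1 hM.1.ne_bot)).trans_lt
    (hM.degree_lt_stepMatrix_mul_zero_zero (degree_X_add_C a))

lemma eq_of_infinite_map_evalRingHom_eq [IsDomain R] {M N : SL(2, R[X])}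
    (h : {t : R | Matrix.SpecialLinearGroup.map (evalRingHom t) M =
      Matrix.SpecialLinearGroup.map (evalRingHom t) N}.Infinite) : M = N := by
  ext i j
  refine congrArg (coeff · _) (eq_of_infinite_eval_eq _ _ (h.mono fun t ht => ?_))
  exact congrArg (fun A : SL(2, R) => A.1 i j) ht

end WordMatrix

section Elliptic

lemma eq_add_smul_of_commute {K : Type*} [Field K] {A M : Matrix (Fin 2) (Fin 2) K}
    (hA : A 1 0 ≠ 0) (h : M * A = A * M) : ∃ a s : K, M = a • 1 + s • A := by
  have h00 := congrFun (congrFun h 0) 0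
  have h10 := congrFun (congrFun h 1) 0
  simp only [Matrix.mul_apply, Fin.sum_univ_two] at h00 h10
  refine ⟨M 0 0 - M 1 0 / A 1 0 * A 0 0, M 1 0 / A 1 0, ?_⟩
  ext i j
  fin_cases i <;> fin_cases j <;> simp <;> field_simp
  · linear_combination h00
  · linear_combination h10

lemma apply_one_zero_ne_zero_of_abs_trace_lt_two {A : SL(2, ℝ)} (hA : |A.1.trace| < 2) :
    A.1 1 0 ≠ 0 := by
  intro h
  have hdet := A.2
  rw [Matrix.det_fin_two, h] at hdet
  rw [Matrix.trace_fin_two, abs_lt] at hA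
  nlinarith [sq_nonneg (A.1 0 0 - A.1 1 1)]

lemma isCompact_centralizer {A : SL(2, ℝ)} (hA : |A.1.trace| < 2) :
    IsCompact (Subgroup.centralizer {A} : Set SL(2, ℝ)) := by
  set t := A.1.trace with ht
  have hpos : 0 < 4 - t ^ 2 := by nlinarith [abs_lt.1 hA]
  set r := √(4 / (4 - t ^ 2))
  have hcont : Continuous fun p : ℝ × ℝ => p.1 • (1 : Matrix (Fin 2) (Fin 2) ℝ) + p.2 • A.1 := by
    fun_prop
  have hIcc : IsCompact (Icc (-r) r) := isCompact_Icc
  have hcompact := (hIcc.prod hIcc).image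
    hcont
  have hclosed : IsClosed (Subgroup.centralizer {A} : Set SL(2, ℝ)) := Set.isClosed_centralizer _
  refine (Matrix.SpecialLinearGroup.isClosedEmbedding_val.isCompact_preimage
    hcompact).of_isClosed_subset hclosed fun M hM => ?_
  obtain ⟨a, s, hM'⟩ := eq_add_smul_of_commute (apply_one_zero_ne_zero_of_abs_trace_lt_two hA)
    (congrArg Subtype.val (hM A rfl)).symm
  have hdetA := A.2
  have hdetM := M.2
  rw [Matrix.trace_fin_two] at ht
  rw [Matrix.det_fin_two] at hdetA
  rw [hM', Matrix.det_fin_two] at hdetM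
  simp only [Matrix.add_apply, Matrix.smul_apply, Matrix.one_apply_eq, smul_eq_mul,
    Matrix.one_apply_ne zero_ne_one, Matrix.one_apply_ne one_ne_zero] at hdetM
  have hquad : a ^ 2 + a * s * t + s ^ 2 = 1 := by
    rw [ht]
    linear_combination hdetM - s ^ 2 * hdetA
  have ha : |a| ≤ r := Real.abs_le_sqrt (by
    rw [le_div_iff₀ hpos]
    nlinarith [sq_nonneg (2 * s + a * t)])
  have hs : |s| ≤ r := Real.abs_le_sqrt (by
    rw [le_div_iff₀ hpos]
    nlinarith [sq_nonneg (2 * a + s * t)])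
  exact ⟨(a, s), ⟨abs_le.1 ha, abs_le.1 hs⟩, hM'.symm⟩

lemma inv_mem_topologicalClosure_of_mem_isCompact {G : Type*} [Group G] [TopologicalSpace G]
    [IsTopologicalGroup G] {S : Subsemigroup G} {H : Subgroup G} (hH : IsCompact (H : Set G))
    {x : G} (hxS : x ∈ S) (hxH : x ∈ H) : x⁻¹ ∈ S.topologicalClosure := by
  have : CompactSpace H := isCompact_iff_compactSpace.1 hH
  have hcluster : MapClusterPt x⁻¹ Filter.atTop fun n : ℕ => x ^ n := by
    simpa [Function.comp_def] using
      (mapClusterPt_self_zpow_atTop_pow (⟨x, hxH⟩ : H) (-1)).continuousAt_comp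
        continuous_subtype_val.continuousAt
  have hpow (n : ℕ) : x ^ (n + 1) ∈ S := by
    induction n with
    | zero => simpa using hxS
    | succ n ih =>
      rw [pow_succ]
      exact mul_mem ih hxS
  refine mem_closure_iff_clusterPt.2 (hcluster.clusterPt.mono ?_)
  refine Filter.le_principal_iff.2 ((Filter.eventually_ge_atTop 1).mono fun n hn => ?_)
  obtain ⟨m, rfl⟩ := Nat.exists_eq_add_of_le' hn
  exact hpow m

lemma eq_zero_of_trace_mul_eq_zero {A : SL(2, ℝ)} (hA : |A.1.trace| < 2)
    {Z : Matrix (Fin 2) (Fin 2) ℝ} (htr : Z.trace = 0) (htrA : (A.1 * Z).trace = 0)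
    (hdet : 0 ≤ Z.det) : Z = 0 := by
  have hdetA := A.2
  rw [Matrix.det_fin_two] at hdetA hdet
  rw [Matrix.trace_fin_two] at htr hA
  simp only [Matrix.trace_fin_two, Matrix.mul_apply, Fin.sum_univ_two] at htrA
  have hZ : Z 1 1 = -Z 0 0 := by linarith
  rw [hZ] at hdet htrA
  generalize A.1 0 1 = b at *
  generalize A.1 1 0 = c at *
  set e := A.1 0 0 - A.1 1 1 with he
  have hdisc : e ^ 2 + 4 * (b * c) < 0 := by nlinarith [abs_lt.1 hA]
  have hbc : b * c < 0 := by nlinarith [sq_nonneg e]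
  have horth : e * Z 0 0 = -(b * Z 1 0 + c * Z 0 1) := by rw [he]; linarith
  have hform : (b * Z 1 0 - c * Z 0 1) ^ 2 ≤ (e ^ 2 + 4 * (b * c)) * Z 0 0 ^ 2 := by
    have hsq : e ^ 2 * Z 0 0 ^ 2 = (b * Z 1 0 + c * Z 0 1) ^ 2 := by
      rw [← mul_pow, horth, neg_sq]
    nlinarith
  have h00 : Z 0 0 = 0 := by
    by_contra h
    have : 0 < Z 0 0 ^ 2 := by positivity
    nlinarith [sq_nonneg (b * Z 1 0 - c * Z 0 1)]
  rw [h00] at horth hform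
  have hdiff : b * Z 1 0 - c * Z 0 1 = 0 := by nlinarith
  have h10 : Z 1 0 = 0 := (mul_eq_zero.1 (by linarith : b * Z 1 0 = 0)).resolve_left
    (left_ne_zero_of_mul hbc.ne)
  have h01 : Z 0 1 = 0 := (mul_eq_zero.1 (by linarith : c * Z 0 1 = 0)).resolve_left
    (right_ne_zero_of_mul hbc.ne)
  ext i j
  fin_cases i <;> fin_cases j <;> simp [h00, h10, h01, hZ]

lemma det_commutator (A B : SL(2, ℝ)) :
    (A.1 * B.1 - B.1 * A.1).det = 2 - (A * B * A⁻¹ * B⁻¹).1.trace := by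
  have hA := A.2
  have hB := B.2
  rw [Matrix.det_fin_two] at hA hB
  simp only [Matrix.SpecialLinearGroup.coe_mul, Matrix.SpecialLinearGroup.coe_inv,
    Matrix.det_fin_two, Matrix.trace_fin_two, Matrix.mul_apply, Fin.sum_univ_two,
    Matrix.sub_apply, Matrix.adjugate_fin_two, Matrix.of_apply, Matrix.cons_val',
    Matrix.cons_val_zero, Matrix.cons_val_one, Matrix.cons_val_fin_one]
  linear_combination (2 : ℝ) * hA + 2 * (A.1 0 0 * A.1 1 1 - A.1 0 1 * A.1 1 0) * hB

/-- Inverses of elliptic elements are limits of their powers, so the trace bound extends to the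
commutator, whence `det (A * B - B * A) ≥ 0`. -/
lemma commute_of_forall_abs_trace_le_two {S : Subsemigroup SL(2, ℝ)}
    (hS : ∀ M ∈ S, |M.1.trace| ≤ 2) {A B : SL(2, ℝ)} (hAS : A ∈ S) (hBS : B ∈ S)
    (hA : |A.1.trace| < 2) (hB : |B.1.trace| < 2) : A * B = B * A := by
  have hinv {M : SL(2, ℝ)} (hMS : M ∈ S) (hM : |M.1.trace| < 2) : M⁻¹ ∈ S.topologicalClosure :=
    inv_mem_topologicalClosure_of_mem_isCompact (isCompact_centralizer hM) hMS
      (Subgroup.mem_centralizer_singleton_iff.2 rfl)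
  have hmem : A * B * A⁻¹ * B⁻¹ ∈ S.topologicalClosure :=
    mul_mem (mul_mem (mul_mem (subset_closure hAS) (subset_closure hBS)) (hinv hAS hA))
      (hinv hBS hB)
  have htrace : (A * B * A⁻¹ * B⁻¹).1.trace ≤ 2 := by
    have hclosed : IsClosed {M : SL(2, ℝ) | M.1.trace ≤ 2} :=
      isClosed_le (continuous_subtype_val.matrix_trace) continuous_const
    exact closure_minimal (fun M hM => (abs_le.1 (hS M hM)).2) hclosed hmem
  have horth (M N : Matrix (Fin 2) (Fin 2) ℝ) : (M * (M * N - N * M)).trace = 0 := by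
    rw [mul_sub, Matrix.trace_sub, Matrix.trace_mul_comm M (M * N), mul_assoc, sub_self]
  refine Subtype.ext (sub_eq_zero.1 (eq_zero_of_trace_mul_eq_zero hA ?_ ?_ ?_))
  · simp only [Matrix.SpecialLinearGroup.coe_mul]
    rw [Matrix.trace_sub, Matrix.trace_mul_comm, sub_self]
  · exact horth A.1 B.1
  · rw [Matrix.SpecialLinearGroup.coe_mul, Matrix.SpecialLinearGroup.coe_mul, det_commutator]
    linarith

end Elliptic

lemma exists_abs_trace_wordMatrix_ne_two {k : ℕ} (hk : k ≠ 0) {l : List ℝ} (hl : l ≠ []) {δ : ℝ}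
    (hδ : 0 < δ) : ∃ t, |t| < δ ∧ |(wordMatrix k (l.map (t + ·))).1.trace| ≠ 2 := by
  by_contra! h
  set p := (wordMatrix k (l.map fun a => X + Polynomial.C a)).1.trace with hp
  have hdeg : 0 < p.degree := degree_trace_wordMatrix_pos hk hl
  have heval (t : ℝ) : p.eval t = (wordMatrix k (l.map (t + ·))).1.trace := by
    rw [hp, ← coe_evalRingHom, ← trace_map, map_wordMatrix, List.map_map]
    simp [Function.comp_def]
  have hconst : p ^ 2 = Polynomial.C 4 := by
    refine eq_of_infinite_eval_eq _ _ ((Ioo_infinite (neg_lt_self hδ)).mono fun t ht => ?_)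
    have htwo := h t (abs_lt.2 ht)
    rw [← heval] at htwo
    rw [mem_ofPred_eq, eval_pow, ← sq_abs, htwo, eval_C]
    norm_num
  have hdeg' := congrArg natDegree hconst
  rw [natDegree_pow, natDegree_C] at hdeg'
  have := natDegree_pos_iff_degree_pos.2 hdeg
  omega

lemma exists_not_commute_stepMatrix_pow_mul {A : SL(2, ℝ)} (hA : |A.1.trace| < 2) {k : ℕ}
    (hk : k ≠ 0) (a : ℝ) (B : SL(2, ℝ)) {t₀ r : ℝ} (hr : 0 < r) :
    ∃ t, |t - t₀| < r ∧ stepMatrix (t + a) ^ k * B * A ≠ A * (stepMatrix (t + a) ^ k * B) := by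
  by_contra! h
  let φ := Matrix.SpecialLinearGroup.map (n := Fin 2) (Polynomial.C : ℝ →+* ℝ[X])
  set P := stepMatrix (X + Polynomial.C a) ^ k with hP
  have heval (t : ℝ) :
      Matrix.SpecialLinearGroup.map (evalRingHom t) P = stepMatrix (t + a) ^ k := by
    rw [hP, map_pow, map_evalRingHom_stepMatrix]
  have hφ (t : ℝ) (M : SL(2, ℝ)) : Matrix.SpecialLinearGroup.map (evalRingHom t) (φ M) = M := by
    ext
    simp [φ]
  have hcomm : P * φ B * φ A = φ A * (P * φ B) := by
    refine eq_of_infinite_map_evalRingHom_eq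
      ((Ioo_infinite (show t₀ - r < t₀ + r by linarith)).mono fun t ht => ?_)
    have := h t (by rw [abs_sub_lt_iff]; constructor <;> linarith [ht.1, ht.2])
    simpa [heval, hφ] using this
  have hmem (t : ℝ) : stepMatrix (t + a) ^ k * B ∈ Subgroup.centralizer {A} := by
    rw [Subgroup.mem_centralizer_singleton_iff]
    simpa [heval, hφ] using congrArg (Matrix.SpecialLinearGroup.map (evalRingHom t)) hcomm
  have hcont : Continuous fun M : SL(2, ℝ) => |(M * B⁻¹).1 0 0| :=
    ((continuous_subtype_val.comp (continuous_mul_const B⁻¹)).matrix_elem 0 0).abs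
  obtain ⟨K, hK⟩ := ((isCompact_centralizer hA).image hcont).bddAbove
  have hbound (t : ℝ) : |(P.1 0 0).eval t| ≤ K := by
    have hentry : (P.1 0 0).eval t = (stepMatrix (t + a) ^ k * B * B⁻¹).1 0 0 := by
      rw [mul_inv_cancel_right, ← heval]
      simp
    exact hentry ▸ hK ⟨_, hmem t, rfl⟩
  obtain ⟨t, ht⟩ := ((abs_tendsto_atTop _ (degree_stepMatrix_pow_pos hk a)).eventually_gt_atTop
    K).exists
  exact (hbound t).not_gt ht

lemma continuous_stepMatrix : Continuous (stepMatrix : ℝ → SL(2, ℝ)) :=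
  Continuous.subtype_mk (f := fun x : ℝ => !![x, -1; 1, 0]) (by fun_prop) _

/-- Otherwise the words near `x` would generate a semigroup whose elliptic elements all commute;
but moving a single letter moves the centralizer, by polynomial growth of the corner entry. -/
lemma exists_two_lt_abs_trace_wordMatrix {k : ℕ} (hk : k ≠ 0) {x : List ℝ} (hx : x ≠ []) {δ : ℝ}
    (hδ : 0 < δ) {L : Set (List ℝ)} (happend : ∀ l ∈ L, ∀ l' ∈ L, l ++ l' ∈ L)
    (hnear : ∀ l, List.Forall₂ (fun a b => |b - a| < δ) x l → l ∈ L) :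
    ∃ l ∈ L, 2 < |(wordMatrix k l).1.trace| := by
  by_contra! htrace
  let S : Subsemigroup SL(2, ℝ) :=
    { carrier := wordMatrix k '' L
      mul_mem' := by
        rintro _ _ ⟨l, hl, rfl⟩ ⟨l', hl', rfl⟩
        exact ⟨l ++ l', happend l hl l' hl', wordMatrix_append k l l'⟩ }
  have hS : ∀ M ∈ S, |M.1.trace| ≤ 2 := by
    rintro _ ⟨l, hl, rfl⟩
    exact htrace l hl
  have htranslate (l : List ℝ) {t : ℝ} (ht : |t| < δ) :
      List.Forall₂ (fun a b => |b - a| < δ) l (l.map (t + ·)) := by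
    rw [List.forall₂_map_right_iff]
    exact List.forall₂_same.2 fun a _ => by simpa using ht
  obtain ⟨t₀, ht₀, hne⟩ := exists_abs_trace_wordMatrix_ne_two hk hx hδ
  obtain ⟨a, x, rfl⟩ := List.exists_cons_of_ne_nil hx
  set A := wordMatrix k ((a :: x).map (t₀ + ·)) with hA
  set B := wordMatrix k (x.map (t₀ + ·))
  have hAS : A ∈ S := ⟨_, hnear _ (htranslate _ ht₀), rfl⟩
  have hAtrace : |A.1.trace| < 2 := (hS A hAS).lt_of_ne hne
  have hBS {t : ℝ} (ht : |t| < δ) : stepMatrix (t + a) ^ k * B ∈ S :=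
    ⟨_, hnear ((t + a) :: x.map (t₀ + ·)) (.cons (by simpa using ht) (htranslate x ht₀)),
      wordMatrix_cons ..⟩
  have hev : ∀ᶠ t in nhds t₀, |t| < δ ∧ |(stepMatrix (t + a) ^ k * B).1.trace| < 2 := by
    have hcont : Continuous fun t : ℝ => |(stepMatrix (t + a) ^ k * B).1.trace| :=
      (continuous_subtype_val.comp (((continuous_stepMatrix.comp
        (continuous_add_const a)).pow k).mul_const B)).matrix_trace.abs
    refine (continuous_abs.continuousAt.eventually_lt continuousAt_const ht₀).and
      (hcont.continuousAt.eventually_lt continuousAt_const ?_)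
    rwa [hA, List.map_cons, wordMatrix_cons] at hAtrace
  obtain ⟨r, hr, hball⟩ := Metric.eventually_nhds_iff.1 hev
  obtain ⟨t, ht, hnotcomm⟩ := exists_not_commute_stepMatrix_pow_mul hAtrace hk a B hr (t₀ := t₀)
  obtain ⟨htδ, httrace⟩ := hball (by rwa [Real.dist_eq])
  exact hnotcomm (commute_of_forall_abs_trace_le_two hS (hBS htδ) hAS httrace hAtrace)

end HyperbolicWords

/-! ### Opening gaps at all energies -/

section OpeningGaps

open scoped MatrixGroups

/-- The `k`-fold repetition `lam * V^{⊛k}`, as a linear map of bounded potentials. -/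
def scaledRepeat (lam : ℝ) (k : ℕ) : (ℤ →ᵇ ℝ) →ₗ[ℝ] (ℤ →ᵇ ℝ) where
  toFun V := lam • V.compContinuous ⟨(Int.fdiv · k), continuous_of_discreteTopology⟩
  map_add' _ _ := by ext; simp [mul_add]
  map_smul' _ _ := by ext; simp [mul_left_comm]

lemma scaledRepeat_apply (lam : ℝ) (k : ℕ) (V : ℤ →ᵇ ℝ) (n : ℤ) :
    scaledRepeat lam k V n = lam * V (n / k) := by
  rw [← Int.fdiv_eq_ediv_of_nonneg _ (Int.natCast_nonneg k)]
  rfl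

lemma coe_scaledRepeat (lam : ℝ) (k : ℕ) (V : ℤ →ᵇ ℝ) :
    ⇑(scaledRepeat lam k V) = fun n => lam * repeatPot V k n := rfl

lemma norm_scaledRepeat_le (lam : ℝ) (k : ℕ) (V : ℤ →ᵇ ℝ) :
    ‖scaledRepeat lam k V‖ ≤ |lam| * ‖V‖ :=
  (norm_smul_le _ _).trans (mul_le_mul_of_nonneg_left (norm_compContinuous_le _ _) (abs_nonneg _))

lemma periodic_scaledRepeat {V : ℤ →ᵇ ℝ} {N : ℕ} (hV : Function.Periodic V N) (lam : ℝ) {k : ℕ}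
    (hk : k ≠ 0) : Function.Periodic (scaledRepeat lam k V) (k * N : ℕ) := fun n => by
  rw [scaledRepeat_apply, scaledRepeat_apply, Nat.cast_mul,
    Int.add_mul_ediv_left _ _ (by exact_mod_cast hk), hV]

lemma translatePot_neg_eq_of_periodic {W : ℤ →ᵇ ℝ} {a : ℤ} (hW : Function.Periodic W a) :
    translatePot (-a) W = W := by
  ext n
  exact hW.neg n

lemma cocycle_apply (W : ℤ →ᵇ ℝ) (j : ℕ) (a b : Fin 2) :
    (cocycle W j).1 a b (j - 1) =
      ((List.range j).map fun i : ℕ => stepMatrix (-W i)).prod.1 a b := by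
  induction j generalizing a b with
  | zero => fin_cases a <;> fin_cases b <;> simp [cocycle]
  | succ j ih =>
    have hadd : (j : ℤ) + -1 = j - 1 := rfl
    fin_cases b <;>
      simp [cocycle_succ, List.range_succ, Matrix.mul_apply, hadd, ih]

lemma prod_map_range_mul {M : Type*} [Monoid M] (f : ℕ → M) {k : ℕ} (hk : 0 < k) (m : ℕ) :
    ((List.range (k * m)).map fun i => f (i / k)).prod =
      ((List.range m).map fun i => f i ^ k).prod := by
  induction m with
  | zero => simp
  | succ m ih =>
    have hdiv : (List.range k).map ((fun i => f (i / k)) ∘ (k * m + ·)) =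
        (List.range k).map fun _ => f m := List.map_congr_left fun i hi => by
      rw [Function.comp_apply, Nat.mul_add_div hk, Nat.div_eq_of_lt (List.mem_range.1 hi), add_zero]
    rw [Nat.mul_succ, List.range_add, List.map_append, List.prod_append, ih, List.range_succ,
      List.map_append, List.prod_append, List.map_map, hdiv]
    simp

lemma trace_cocycle_scaledRepeat_sub (lam : ℝ) {k : ℕ} (hk : 0 < k) (V : ℤ →ᵇ ℝ) (E : ℝ) (m : ℕ) :
    (cocycle (scaledRepeat lam k V - algebraMap ℝ _ E) (k * m)).1.trace ((k * m : ℕ) - 1) =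
      (wordMatrix k ((List.range m).map fun i : ℕ => E - lam * V i)).1.trace := by
  have hletter (i : ℕ) : stepMatrix (-(scaledRepeat lam k V - algebraMap ℝ _ E) i) =
      stepMatrix (E - lam * V ((i / k : ℕ) : ℤ)) := by
    congr 1
    simp [scaledRepeat_apply]
  simp only [Matrix.trace_fin_two, BoundedContinuousFunction.add_apply, cocycle_apply, hletter]
  rw [prod_map_range_mul (fun i : ℕ => stepMatrix (E - lam * V i)) hk, wordMatrix, List.map_map]
  rfl

lemma norm_le_of_periodic {W : ℤ →ᵇ ℝ} {m : ℕ} (hm : 0 < m) (hW : Function.Periodic W m) {ε : ℝ}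
    (hε : 0 ≤ ε) (hle : ∀ i : ℕ, i < m → |W i| ≤ ε) : ‖W‖ ≤ ε := by
  refine (norm_le hε).2 fun n => ?_
  have hm' : (0 : ℤ) < m := by exact_mod_cast hm
  obtain ⟨i, hi⟩ := Int.eq_ofNat_of_zero_le (Int.emod_nonneg n hm'.ne')
  have hred : W n = W i := by
    rw [← hi, Int.emod_def, mul_comm]
    exact (hW.sub_zsmul_eq (n / m)).symm
  rw [hred]
  exact hle i (by exact_mod_cast hi ▸ Int.emod_lt_of_pos n hm')

/-- The biinfinite sequence repeating a word; it vanishes for the empty word. -/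
def periodicExtension (l : List ℝ) : ℤ →ᵇ ℝ :=
  ofNormedAddCommGroupDiscrete (fun n => l.getD (n % l.length).toNat 0) (l.map (|·|)).sum
    fun n => by
      obtain h | h := lt_or_ge (n % l.length).toNat l.length
      · rw [List.getD_eq_getElem _ _ h]
        exact List.single_le_sum (by simp) _ (List.mem_map_of_mem (List.getElem_mem h))
      · rw [List.getD_eq_default _ _ h, norm_zero]
        exact List.sum_nonneg (by simp)

lemma periodic_periodicExtension (l : List ℝ) :
    Function.Periodic (periodicExtension l) l.length := fun n => by
  simp [periodicExtension]

lemma periodicExtension_natCast {l : List ℝ} {i : ℕ} (hi : i < l.length) :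
    periodicExtension l i = l[i] := by
  simp [periodicExtension, ← Int.natCast_mod, Nat.mod_eq_of_lt hi, hi]

/-- The word `l` is the sequence of diagonal entries of `E - lam * W`. -/
lemma exists_boundedBelow_scaledRepeat_periodicExtension {k : ℕ} (hk : 0 < k) {lam : ℝ}
    (hlam : lam ≠ 0) (E : ℝ) {l : List ℝ}
    (htrace : 2 < |(wordMatrix k l).1.trace|) :
    ∃ c > 0, BoundedBelow (schrodinger ℝ
      (scaledRepeat lam k (lam⁻¹ • (algebraMap ℝ _ E - periodicExtension l)) -
        algebraMap ℝ _ E)) c := by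
  set W : ℤ →ᵇ ℝ := lam⁻¹ • (algebraMap ℝ _ E - periodicExtension l)
  have hW : Function.Periodic W l.length :=
    fun n => by simp [W, periodic_periodicExtension l n]
  have hletter : (List.range l.length).map (fun i : ℕ => E - lam * W i) = l :=
    List.ext_getElem (by simp) fun i _ hi => by simp [W, periodicExtension_natCast hi, hlam]
  have hper : Function.Periodic ⇑(scaledRepeat lam k W - algebraMap ℝ (ℤ →ᵇ ℝ) E)
      (k * l.length : ℕ) :=
    fun n => congrArg (· - E) (periodic_scaledRepeat hW lam hk.ne' n)
  refine exists_boundedBelow_of_two_lt_abs_trace (translatePot_neg_eq_of_periodic hper) ?_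
  rwa [trace_cocycle_scaledRepeat_sub lam hk, hletter]

/-- The words near the periodic sequence `E - lam * V` are closed under concatenation, so one of
them is hyperbolic. -/
lemma exists_isPeriodicSeq_boundedBelow {V : ℤ →ᵇ ℝ} (hV : IsPeriodicSeq V) {ε : ℝ} (hε : 0 < ε)
    {lam : ℝ} (hlam : lam ≠ 0) {k : ℕ} (hk : 0 < k) (E : ℝ) :
    ∃ W : ℤ →ᵇ ℝ, IsPeriodicSeq W ∧ ‖W - V‖ ≤ ε ∧
      ∃ c > 0, BoundedBelow (schrodinger ℝ (scaledRepeat lam k W - algebraMap ℝ _ E)) c := by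
  obtain ⟨q, hq, hper⟩ := hV
  replace hper : Function.Periodic V q := hper
  let y (i : ℕ) : ℝ := E - lam * V i
  let L : Set (List ℝ) := {l | q ∣ l.length ∧ ∀ i (hi : i < l.length), |l[i] - y i| < ε * |lam|}
  have happend : ∀ l ∈ L, ∀ l' ∈ L, l ++ l' ∈ L := by
    rintro l ⟨hdvd, hl⟩ l' ⟨hdvd', hl'⟩
    refine ⟨by simpa using dvd_add hdvd hdvd', fun i hi => ?_⟩
    obtain hil | hil := lt_or_ge i l.length
    · simpa [hil] using hl i hil
    · obtain ⟨c, hc⟩ := hdvd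
      have hshift : V i = V ((i - l.length : ℕ) : ℤ) := by
        rw [Nat.cast_sub hil, hc, Nat.cast_mul, mul_comm, hper.sub_nat_mul_eq]
      have hi' : i - l.length < l'.length := by rw [List.length_append] at hi; omega
      simpa [List.getElem_append_right hil, y, hshift] using hl' _ hi'
  have hnear : ∀ l, List.Forall₂ (fun a b => |b - a| < ε * |lam|) ((List.range q).map y) l →
      l ∈ L := fun l hl => by
    have hlen : q = l.length := by simpa using hl.length_eq
    refine ⟨hlen.dvd, fun i hi => ?_⟩
    simpa using hl.get (i := i) (by simpa [hlen]) hi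
  obtain ⟨l, ⟨hdvd, hl⟩, htrace⟩ := exists_two_lt_abs_trace_wordMatrix hk.ne'
    (x := (List.range q).map y) (by simpa using hq.ne') (by positivity) happend hnear
  have hl0 : 0 < l.length := by
    rw [List.length_pos_iff]
    rintro rfl
    norm_num [wordMatrix, Matrix.trace_fin_two] at htrace
  refine ⟨lam⁻¹ • (algebraMap ℝ _ E - periodicExtension l), ?_, ?_,
    exists_boundedBelow_scaledRepeat_periodicExtension hk hlam E htrace⟩
  · exact ⟨l.length, hl0, fun n => by simp [periodic_periodicExtension l n]⟩
  · have hVl : Function.Periodic V l.length := by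
      obtain ⟨c, hc⟩ := hdvd
      rw [hc, Nat.cast_mul, mul_comm]
      exact hper.int_mul c
    refine norm_le_of_periodic hl0 (fun n => ?_) hε.le fun i hi => ?_
    · simp [periodic_periodicExtension l n, hVl n]
    · have hdiff : (lam⁻¹ • (algebraMap ℝ _ E - periodicExtension l) - V) i =
          -(l[i] - y i) / lam := by
        simp only [coe_sub, coe_smul, Pi.sub_apply, BoundedContinuousFunction.algebraMap_apply,
          smul_eq_mul, mul_one, periodicExtension_natCast hi, y]
        field_simp
        ring
      rw [hdiff, abs_div, abs_neg, div_le_iff₀ (abs_pos.2 hlam)]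
      exact (hl i hi).le

/-- The couplings in play when the repetition numbers are at most `K`. -/
def couplings (K : ℕ) : Set ℝ := {lam | (K : ℝ)⁻¹ ≤ |lam| ∧ |lam| ≤ K}

lemma isCompact_couplings (K : ℕ) : IsCompact (couplings K) := by
  refine Metric.isCompact_of_isClosed_isBounded ?_ ?_
  · exact (isClosed_le continuous_const continuous_abs).inter
      (isClosed_le continuous_abs continuous_const)
  · exact (Metric.isBounded_closedBall (x := (0 : ℝ)) (r := K)).subset fun lam hlam => by
      simpa using hlam.2

lemma ne_zero_of_mem_couplings {K : ℕ} (hK : 0 < K) {lam : ℝ} (h : lam ∈ couplings K) :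
    lam ≠ 0 := by
  rintro rfl
  have := h.1
  rw [abs_zero, inv_nonpos] at this
  exact absurd hK (by exact_mod_cast this.not_gt)

/-- The potential of `H_{lam * W^{⊛k}} - E`, for the parameter `p = (k, lam, E)`. -/
def shiftedRepeat (W : ℤ →ᵇ ℝ) (p : ℕ × ℝ × ℝ) : ℤ →ᵇ ℝ :=
  scaledRepeat p.2.1 p.1 W - algebraMap ℝ _ p.2.2

lemma continuous_shiftedRepeat (W : ℤ →ᵇ ℝ) : Continuous (shiftedRepeat W) := by
  refine continuous_prod_of_discrete_left.2 fun k => ?_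
  have hlam : Continuous fun p : ℝ × ℝ => scaledRepeat p.1 k W :=
    continuous_fst.smul continuous_const
  exact hlam.sub ((continuous_algebraMap ℝ (ℤ →ᵇ ℝ)).comp continuous_snd)

lemma exists_finite_boundedBelow_of_isCompact {V : ℤ →ᵇ ℝ} (hV : IsPeriodicSeq V) {ε : ℝ}
    (hε : 0 < ε) {T : Set (ℕ × ℝ × ℝ)} (hT : IsCompact T) (hpos : ∀ p ∈ T, 0 < p.1)
    (hne : ∀ p ∈ T, p.2.1 ≠ 0) :
    ∃ F : Set (ℤ →ᵇ ℝ), F.Finite ∧ (∀ W ∈ F, IsPeriodicSeq W ∧ ‖W - V‖ ≤ ε) ∧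
      ∃ η > 0, ∀ p ∈ T, ∃ W ∈ F, BoundedBelow (schrodinger ℝ (shiftedRepeat W p)) η := by
  let P (S : Set (ℕ × ℝ × ℝ)) : Prop :=
    ∃ F : Set (ℤ →ᵇ ℝ), F.Finite ∧ (∀ W ∈ F, IsPeriodicSeq W ∧ ‖W - V‖ ≤ ε) ∧
      ∃ η > 0, ∀ p ∈ S, ∃ W ∈ F, BoundedBelow (schrodinger ℝ (shiftedRepeat W p)) η
  refine hT.induction_on (p := P) ⟨∅, finite_empty, by simp, 1, one_pos, by simp⟩ ?_ ?_ ?_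
  · rintro S S' hSS' ⟨F, hF, hFV, η, hη, h⟩
    exact ⟨F, hF, hFV, η, hη, fun p hp => h p (hSS' hp)⟩
  · rintro S S' ⟨F, hF, hFV, η, hη, h⟩ ⟨F', hF', hFV', η', hη', h'⟩
    refine ⟨F ∪ F', hF.union hF', fun W hW => hW.elim (hFV W) (hFV' W), min η η',
      lt_min hη hη', fun p hp => hp.elim (fun hp => ?_) fun hp => ?_⟩
    · obtain ⟨W, hW, hbelow⟩ := h p hp
      exact ⟨W, .inl hW, hbelow.mono (min_le_left _ _)⟩
    · obtain ⟨W, hW, hbelow⟩ := h' p hp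
      exact ⟨W, .inr hW, hbelow.mono (min_le_right _ _)⟩
  · intro p hp
    obtain ⟨W, hW, hWV, c, hc, hbelow⟩ :=
      exists_isPeriodicSeq_boundedBelow hV hε (hne p hp) (hpos p hp) p.2.2
    have hnhds := (continuous_shiftedRepeat W).continuousAt.preimage_mem_nhds
      (Metric.closedBall_mem_nhds (shiftedRepeat W p) (half_pos hc))
    refine ⟨_, mem_nhdsWithin_of_mem_nhds hnhds, {W}, finite_singleton W, by simp [hW, hWV],
      c - c / 2, by linarith, fun p' hp' => ⟨W, rfl, ?_⟩⟩
    exact hbelow.schrodinger_of_norm_sub_le (by rwa [← dist_eq_norm, dist_comm])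

/-- At energies beyond the spectra no perturbation is needed, so compactness leaves a finite
family. -/
lemma exists_finite_boundedBelow {V : ℤ →ᵇ ℝ} (hV : IsPeriodicSeq V) {ε : ℝ} (hε : 0 < ε) {K : ℕ}
    (hK : 0 < K) :
    ∃ F : Set (ℤ →ᵇ ℝ), F.Finite ∧ F.Nonempty ∧ (∀ W ∈ F, IsPeriodicSeq W ∧ ‖W - V‖ ≤ ε) ∧
      ∃ η > 0, ∀ k, 0 < k → k ≤ K → ∀ lam ∈ couplings K, ∀ E, ∃ W ∈ F,
        BoundedBelow (schrodinger ℝ (shiftedRepeat W (k, lam, E))) η := by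
  let R : ℝ := 3 + K * ‖V‖
  obtain ⟨F, hF, hFV, η, hη, h⟩ := exists_finite_boundedBelow_of_isCompact hV hε
    (T := Icc 1 K ×ˢ couplings K ×ˢ Icc (-R) R)
    ((finite_Icc 1 K).isCompact.prod ((isCompact_couplings K).prod isCompact_Icc))
    (fun p hp => hp.1.1) (fun p hp => ne_zero_of_mem_couplings hK hp.2.1)
  refine ⟨insert V F, hF.insert V, insert_nonempty V F, ?_, min η 1, lt_min hη one_pos,
    fun k hk hkK lam hlam E => ?_⟩
  · rintro W (rfl | hW)
    · exact ⟨hV, by simpa using hε.le⟩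
    · exact hFV W hW
  obtain hE | hE := le_or_gt |E| R
  · obtain ⟨W, hW, hbelow⟩ := h (k, lam, E) ⟨⟨hk, hkK⟩, hlam, abs_le.1 hE⟩
    exact ⟨W, .inr hW, hbelow.mono (min_le_left _ _)⟩
  · have hnorm : ‖schrodinger ℝ (scaledRepeat lam k V)‖ ≤ 2 + K * ‖V‖ := by
      refine (norm_schrodinger_le _).trans (add_le_add_right ?_ _)
      exact (norm_scaledRepeat_le _ _ _).trans (by gcongr; exact hlam.2)
    have hlarge := (boundedBelow_algebraMap_sub (schrodinger ℝ (scaledRepeat lam k V)) E).mono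
      (d := min η 1) ((min_le_right _ _).trans (by rw [Real.norm_eq_abs]; linarith))
    refine ⟨V, .inl rfl, fun f => (hlarge f).trans_eq ?_⟩
    rw [shiftedRepeat, schrodinger_sub_algebraMap, ← neg_sub, _root_.neg_apply,
      norm_neg]

lemma exists_common_period {F : Set (ℤ →ᵇ ℝ)} (hF : F.Finite) (hper : ∀ W ∈ F, IsPeriodicSeq W) :
    ∃ N : ℕ, 0 < N ∧ ∀ W ∈ F, Function.Periodic W N := by
  choose! p hp hWp using hper
  refine ⟨∏ W ∈ hF.toFinset, p W, Finset.prod_pos fun W hW => hp W (hF.mem_toFinset.1 hW),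
    fun W hW => ?_⟩
  obtain ⟨c, hc⟩ := Finset.dvd_prod_of_mem p (hF.mem_toFinset.2 hW)
  rw [hc, Nat.cast_mul, mul_comm]
  exact (show Function.Periodic W (p W) from hWp W hW).int_mul c

end OpeningGaps

/-! ### Decoupling at stretches with a gap -/

section Decay

variable {𝕜 : Type*} [RCLike 𝕜]

lemma norm_mulOp_apply_le_norm_mulOp_apply {W V : ℤ →ᵇ ℝ} (hWV : ∀ n, |W n| ≤ |V n|)
    (f : LTwo 𝕜) : ‖mulOp 𝕜 W f‖ ≤ ‖mulOp 𝕜 V f‖ := by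
  refine (sq_le_sq₀ (norm_nonneg _) (norm_nonneg _)).1
    (hasSum_le (fun n => ?_) (hasSum_norm_sq _) (hasSum_norm_sq _))
  simp only [mulOp_apply, norm_mul, RCLike.norm_ofReal]
  exact pow_le_pow_left₀ (by positivity) (mul_le_mul_of_nonneg_right (hWV n) (norm_nonneg _)) 2

lemma norm_mulOp_add_algebraMap_apply_le (W : ℤ →ᵇ ℝ) {δ : ℝ} (hδ : 0 ≤ δ) (f : LTwo 𝕜) :
    ‖mulOp 𝕜 (W + algebraMap ℝ _ δ) f‖ ≤ ‖mulOp 𝕜 W f‖ + δ * ‖f‖ := by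
  have hexpand : mulOp 𝕜 (W + algebraMap ℝ _ δ) f = mulOp 𝕜 W f + δ • f := by
    rw [map_add, AlgHom.commutes, _root_.add_apply, Algebra.algebraMap_eq_smul_one]
    rfl
  rw [hexpand]
  exact (norm_add_le _ _).trans_eq (by rw [norm_smul, Real.norm_of_nonneg hδ])

lemma schrodinger_mulOp_apply {U U' ρ : ℤ →ᵇ ℝ} (hUU' : ∀ n, ρ n ≠ 0 → U' n = U n) (f : LTwo 𝕜) :
    schrodinger 𝕜 U' (mulOp 𝕜 ρ f) = mulOp 𝕜 ρ (schrodinger 𝕜 U f) +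
      shiftOp 𝕜 (-1) (mulOp 𝕜 (ρ - translatePot 1 ρ) f) +
      shiftOp 𝕜 1 (mulOp 𝕜 (ρ - translatePot (-1) ρ) f) := by
  ext n
  have hUn : (U' n : 𝕜) * ρ n = U n * ρ n := by
    obtain h | h := eq_or_ne (ρ n) 0
    · simp [h]
    · rw [hUU' n h]
  simp only [schrodinger_apply, mulOp_apply, AddSubgroup.coe_add, PreLp.add_apply, shiftOp_apply,
    BoundedContinuousFunction.sub_apply, RCLike.ofReal_sub, ← sub_eq_add_neg, translatePot_apply,
    sub_add_cancel, add_sub_cancel_right]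
  linear_combination f n * hUn

/-- The cutoff `ρ` varies slowly enough for its commutator with `H_{U'}` to be absorbed by the
gap. -/
lemma norm_mulOp_apply_le_of_boundedBelow {U U' ρ : ℤ →ᵇ ℝ} {η δ : ℝ} (hη : 0 < η)
    (hbelow : BoundedBelow (schrodinger 𝕜 U') η) (hUU' : ∀ n, ρ n ≠ 0 → U' n = U n)
    (hρ : ‖ρ‖ ≤ 1) (hδ : 0 ≤ δ) (hvar : ∀ a : ℤ, |a| = 1 → ∀ n,
      |ρ n - ρ (n + a)| ≤ |η / 4 * (ρ n + δ)|) (f : LTwo 𝕜) :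
    ‖mulOp 𝕜 ρ f‖ ≤ 2 / η * ‖schrodinger 𝕜 U f‖ + δ * ‖f‖ := by
  have hcomm (a : ℤ) (ha : |a| = 1) : ‖mulOp 𝕜 (ρ - translatePot a ρ) f‖ ≤
      η / 4 * (‖mulOp 𝕜 ρ f‖ + δ * ‖f‖) :=
    calc _ ≤ ‖mulOp 𝕜 ((η / 4) • (ρ + algebraMap ℝ _ δ)) f‖ :=
          norm_mulOp_apply_le_norm_mulOp_apply (hvar a ha) f
      _ = η / 4 * ‖mulOp 𝕜 (ρ + algebraMap ℝ _ δ) f‖ := by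
          rw [map_smul, _root_.smul_apply, norm_smul, Real.norm_of_nonneg (by positivity)]
      _ ≤ _ := by gcongr; exact norm_mulOp_add_algebraMap_apply_le ρ hδ f
  have hmul : ‖mulOp 𝕜 ρ (schrodinger 𝕜 U f)‖ ≤ ‖schrodinger 𝕜 U f‖ := by
    simpa using (mulOp 𝕜 ρ).le_of_opNorm_le ((norm_mulOp_le ρ).trans hρ) (schrodinger 𝕜 U f)
  have htotal := hbelow (mulOp 𝕜 ρ f)
  rw [schrodinger_mulOp_apply hUU'] at htotal
  replace htotal := htotal.trans norm_add₃_le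
  rw [norm_shiftOp_apply, norm_shiftOp_apply] at htotal
  have hsum := add_le_add (hcomm 1 rfl) (hcomm (-1) rfl)
  rw [← sub_nonneg]
  have hfinal : 0 ≤ η / 2 * (2 / η * ‖schrodinger 𝕜 U f‖ + δ * ‖f‖ - ‖mulOp 𝕜 ρ f‖) := by
    field_simp
    linarith
  exact nonneg_of_mul_nonneg_right hfinal (by positivity)

/-- The indicator function of a set of sites. -/
abbrev siteIndicator (A : Set ℤ) : ℤ →ᵇ ℝ := .indicator A (isClopen_discrete A)

lemma abs_exp_sub_exp_le {τ x y : ℝ} (hτ : 0 ≤ τ) (hxy : |x - y| ≤ 1) :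
    |Real.exp (-(τ * x)) - Real.exp (-(τ * y))| ≤ (Real.exp τ - 1) * Real.exp (-(τ * x)) := by
  have hhalf : Real.exp (-(τ * y)) ≤ Real.exp τ * Real.exp (-(τ * x)) := by
    rw [← Real.exp_add]
    refine Real.exp_le_exp.2 ?_
    nlinarith [(abs_le.1 hxy).2]
  have hhalf' : Real.exp (-τ) * Real.exp (-(τ * x)) ≤ Real.exp (-(τ * y)) := by
    rw [← Real.exp_add]
    refine Real.exp_le_exp.2 ?_
    nlinarith [(abs_le.1 hxy).1]
  have hsym : 1 - Real.exp (-τ) ≤ Real.exp τ - 1 := by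
    linarith [Real.add_one_le_exp τ, Real.add_one_le_exp (-τ)]
  rw [abs_le]
  constructor
  · linarith
  · nlinarith [Real.exp_pos (-(τ * x))]

/-- The cutoff is `exp (-τ dist(·, A))` lowered by its value at distance `R`. -/
lemma exists_cutoff {τ : ℝ} (hτ : 0 < τ) (R : ℝ) {A : Set ℤ} (hA : A.Nonempty) :
    ∃ ρ : ℤ →ᵇ ℝ, ‖ρ‖ ≤ 1 ∧ (∀ n, ρ n ≠ 0 → ∃ a ∈ A, dist n a < R) ∧
      (∀ a : ℤ, |a| = 1 → ∀ n,
        |ρ n - ρ (n + a)| ≤ (Real.exp τ - 1) * (ρ n + Real.exp (-(τ * R)))) ∧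
      ∀ n ∈ A, 1 ≤ ρ n + Real.exp (-(τ * R)) := by
  set δ := Real.exp (-(τ * R))
  have hδ : 0 ≤ δ := (Real.exp_pos _).le
  let w (n : ℤ) : ℝ := Real.exp (-(τ * Metric.infDist n A))
  have hw1 (n : ℤ) : w n ≤ 1 :=
    Real.exp_le_one_iff.2 (neg_nonpos.2 (mul_nonneg hτ.le Metric.infDist_nonneg))
  have habs (n : ℤ) : |max (w n - δ) 0| ≤ 1 := by
    rw [abs_of_nonneg (le_max_right _ _)]
    exact max_le (by linarith [hw1 n]) zero_le_one
  have hwρ (n : ℤ) : w n ≤ max (w n - δ) 0 + δ := by linarith [le_max_left (w n - δ) 0]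
  refine ⟨ofNormedAddCommGroupDiscrete (fun n => max (w n - δ) 0) 1 habs,
    (norm_le zero_le_one).2 habs, fun n hn => ?_, fun a ha n => ?_, fun n hn => ?_⟩
  · have hlt : δ < w n := by
      by_contra! h
      exact hn (max_eq_right (sub_nonpos.2 h))
    exact (Metric.infDist_lt_iff hA).1
      (lt_of_mul_lt_mul_left (neg_lt_neg_iff.1 (Real.exp_lt_exp.1 hlt)) hτ.le)
  · have hdist : |Metric.infDist n A - Metric.infDist (n + a) A| ≤ 1 := by
      have hlip := (Metric.lipschitz_infDist_pt A).dist_le_mul n (n + a)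
      rwa [Real.dist_eq, dist_self_add_right, Int.norm_eq_abs, ← Int.cast_abs, ha, Int.cast_one,
        NNReal.coe_one, one_mul] at hlip
    calc |max (w n - δ) 0 - max (w (n + a) - δ) 0| ≤ |w n - w (n + a)| :=
          (abs_max_sub_max_le_abs _ _ _).trans_eq (by rw [sub_sub_sub_cancel_right])
      _ ≤ (Real.exp τ - 1) * w n := abs_exp_sub_exp_le hτ.le hdist
      _ ≤ _ := mul_le_mul_of_nonneg_left (hwρ n) (sub_nonneg.2 (Real.one_le_exp hτ.le))
  · refine le_of_eq_of_le ?_ (hwρ n)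
    simp [w, Metric.infDist_zero_of_mem hn]

/-- If `U` agrees within distance `R` from `A` with a potential having a gap at `0`, then
approximate solutions of `H_U f = 0` are exponentially small on `A`. -/
lemma norm_mulOp_siteIndicator_apply_le {U U' : ℤ →ᵇ ℝ} {η R : ℝ} (hη : 0 < η)
    (hbelow : BoundedBelow (schrodinger 𝕜 U') η) {A : Set ℤ} (hA : A.Nonempty)
    (hUU' : ∀ a ∈ A, ∀ n, dist n a < R → U' n = U n) (f : LTwo 𝕜) :
    ‖mulOp 𝕜 (siteIndicator A) f‖ ≤
      2 / η * ‖schrodinger 𝕜 U f‖ + 2 * Real.exp (-(Real.log (1 + η / 4) * R)) * ‖f‖ := by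
  obtain ⟨ρ, hρ, hsupp, hvar, hA1⟩ := exists_cutoff (τ := Real.log (1 + η / 4))
    (Real.log_pos (by linarith)) R hA
  rw [Real.exp_log (by positivity), add_sub_cancel_left] at hvar
  set δ := Real.exp (-(Real.log (1 + η / 4) * R))
  have hδ : 0 ≤ δ := (Real.exp_pos _).le
  have hagree (n : ℤ) (hn : ρ n ≠ 0) : U' n = U n :=
    let ⟨a, ha, hna⟩ := hsupp n hn
    hUU' a ha n hna
  have hind (n : ℤ) : |siteIndicator A n| ≤ |(ρ + algebraMap ℝ _ δ) n| := by
    by_cases hn : n ∈ A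
    · simpa [siteIndicator, hn] using (hA1 n hn).trans (le_abs_self _)
    · simp [siteIndicator, hn]
  calc ‖mulOp 𝕜 (siteIndicator A) f‖ ≤ ‖mulOp 𝕜 (ρ + algebraMap ℝ _ δ) f‖ :=
        norm_mulOp_apply_le_norm_mulOp_apply hind f
    _ ≤ ‖mulOp 𝕜 ρ f‖ + δ * ‖f‖ := norm_mulOp_add_algebraMap_apply_le ρ hδ f
    _ ≤ (2 / η * ‖schrodinger 𝕜 U f‖ + δ * ‖f‖) + δ * ‖f‖ := by
        gcongr
        exact norm_mulOp_apply_le_of_boundedBelow hη hbelow hagree hρ hδ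
          (fun a ha n => (hvar a ha n).trans (le_abs_self _)) f
    _ = _ := by ring

end Decay

section DirichletBoxes

open Matrix

lemma exists_finset_mul_norm_le_of_isSymmetric {𝕜 E : Type*} [RCLike 𝕜] [NormedAddCommGroup E]
    [InnerProductSpace 𝕜 E] [FiniteDimensional 𝕜 E] {T : E →ₗ[𝕜] E} (hT : T.IsSymmetric) :
    ∃ s : Finset ℝ, s.card ≤ Module.finrank 𝕜 E ∧ ∀ z r : ℝ, 0 ≤ r → (∀ μ ∈ s, r ≤ |z - μ|) →
      ∀ v, r * ‖v‖ ≤ ‖T v - (z : 𝕜) • v‖ := by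
  refine ⟨Finset.univ.image (hT.eigenvalues rfl),
    Finset.card_image_le.trans_eq (Finset.card_fin _), fun z r hr hz v => ?_⟩
  set b := hT.eigenvectorBasis rfl with hb
  refine (pow_le_pow_iff_left₀ (by positivity) (norm_nonneg _) two_ne_zero).1 ?_
  rw [mul_pow, ← b.sum_sq_norm_inner_right, ← b.sum_sq_norm_inner_right, Finset.mul_sum]
  refine Finset.sum_le_sum fun i _ => ?_
  have hcoord : inner 𝕜 (b i) (T v - (z : 𝕜) • v) =
      ((hT.eigenvalues rfl i - z : ℝ) : 𝕜) * inner 𝕜 (b i) v := by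
    rw [inner_sub_right, ← hT, hb, hT.apply_eigenvectorBasis, inner_smul_left, inner_smul_right]
    simp [sub_mul]
  rw [hcoord, norm_mul, mul_pow, RCLike.norm_ofReal, abs_sub_comm]
  gcongr
  exact hz _ (Finset.mem_image_of_mem _ (Finset.mem_univ i))

/-- The restriction of `H_U` to `[0, N)` with Dirichlet boundary conditions. -/
def boxMatrix (U : ℤ → ℝ) (N : ℕ) : Matrix (Fin N) (Fin N) ℝ := fun i j =>
  (if (j : ℤ) = i - 1 then 1 else 0) + (if (j : ℤ) = i + 1 then 1 else 0) +
    if (j : ℤ) = i then U i else 0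

lemma isHermitian_boxMatrix (U : ℤ → ℝ) (N : ℕ) : (boxMatrix U N).IsHermitian := by
  ext i j
  obtain rfl | hij := eq_or_ne i j
  · rfl
  · have : (i : ℤ) ≠ j := by exact_mod_cast Fin.val_ne_of_ne hij
    simp only [conjTranspose_apply, boxMatrix, star_trivial, this, this.symm, if_false, add_zero,
      eq_sub_iff_add_eq, eq_comm (b := (i : ℤ)), eq_comm (b := (j : ℤ))]
    exact add_comm (_ : ℝ) _

lemma sum_fin_ite_val_eq {N : ℕ} (g : ℤ → ℝ) (m : ℤ) :
    ∑ j : Fin N, (if (j : ℤ) = m then g j else 0) = if 0 ≤ m ∧ m < N then g m else 0 := by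
  split_ifs with hm
  · lift m to ℕ using hm.1
    have hmN : m < N := by exact_mod_cast hm.2
    rw [Finset.sum_eq_single ⟨m, hmN⟩
      (fun j _ hj => if_neg fun h => hj (Fin.ext (by simpa using h))) (by simp)]
    simp
  · exact Finset.sum_eq_zero fun j _ => if_neg (by omega)

lemma boxMatrix_mulVec (U g : ℤ → ℝ) {N : ℕ} (i : Fin N) :
    (boxMatrix U N *ᵥ fun j => g j) i = (if (i : ℤ) = 0 then 0 else g (i - 1)) +
      (if (i + 1 : ℤ) = N then 0 else g (i + 1)) + U i * g i := by
  have hi := i.2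
  simp only [mulVec, dotProduct, boxMatrix, add_mul, ite_mul, one_mul, zero_mul,
    Finset.sum_add_distrib]
  rw [sum_fin_ite_val_eq, sum_fin_ite_val_eq, sum_fin_ite_val_eq (fun n => U i * g n)]
  congr 2
  · rw [← ite_not]
    exact if_congr (by omega) rfl rfl
  · rw [← ite_not]
    exact if_congr (by omega) rfl rfl
  · exact if_pos (by omega)

variable {N : ℕ}

/-- The Schrödinger operator with the hopping terms between `n - 1` and `n` removed for all
multiples `n` of `N`. -/
def cutSchrodinger (N : ℕ) (U : ℤ →ᵇ ℝ) : LTwo ℝ →L[ℝ] LTwo ℝ :=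
  schrodinger ℝ U - shiftOp ℝ (-1) * mulOp ℝ (siteIndicator {n | (N : ℤ) ∣ n + 1}) -
    shiftOp ℝ 1 * mulOp ℝ (siteIndicator {n | (N : ℤ) ∣ n})

lemma cutSchrodinger_apply (U : ℤ →ᵇ ℝ) (f : LTwo ℝ) (n : ℤ) :
    cutSchrodinger N U f n = (if (N : ℤ) ∣ n then 0 else f (n - 1)) +
      (if (N : ℤ) ∣ n + 1 then 0 else f (n + 1)) + U n * f n := by
  by_cases h : (N : ℤ) ∣ n <;> by_cases h' : (N : ℤ) ∣ n + 1 <;>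
    simp [cutSchrodinger, schrodinger_apply, siteIndicator, h, h', ← sub_eq_add_neg] <;>
    ring

lemma norm_cutSchrodinger_apply_le (U : ℤ →ᵇ ℝ) (f : LTwo ℝ) :
    ‖cutSchrodinger N U f‖ ≤ ‖schrodinger ℝ U f‖ +
      2 * ‖mulOp ℝ (siteIndicator {n | (N : ℤ) ∣ n ∨ (N : ℤ) ∣ n + 1}) f‖ := by
  have hmono {A B : Set ℤ} (hAB : A ⊆ B) :
      ‖mulOp ℝ (siteIndicator A) f‖ ≤ ‖mulOp ℝ (siteIndicator B) f‖ := by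
    refine norm_mulOp_apply_le_norm_mulOp_apply (fun n => ?_) f
    by_cases hA : n ∈ A
    · simp [siteIndicator, hA, hAB hA]
    · simp [siteIndicator, hA]
  have hsub : ‖cutSchrodinger N U f‖ ≤ ‖schrodinger ℝ U f‖ +
      ‖mulOp ℝ (siteIndicator {n | (N : ℤ) ∣ n + 1}) f‖ +
      ‖mulOp ℝ (siteIndicator {n | (N : ℤ) ∣ n}) f‖ := by
    rw [← norm_shiftOp_apply (-1) (mulOp ℝ _ f),
      ← norm_shiftOp_apply 1 (mulOp ℝ (siteIndicator {n | (N : ℤ) ∣ n}) f)]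
    exact (norm_sub_le _ _).trans (add_le_add_left (norm_sub_le _ _) _)
  have hright : {n | (N : ℤ) ∣ n + 1} ⊆ {n | (N : ℤ) ∣ n ∨ (N : ℤ) ∣ n + 1} := fun _ => Or.inr
  have hleft : {n | (N : ℤ) ∣ n} ⊆ {n | (N : ℤ) ∣ n ∨ (N : ℤ) ∣ n + 1} := fun _ => Or.inl
  linarith [hmono hright, hmono hleft]

lemma hasSum_norm_sq_blocks (hN : 0 < N) (f : LTwo ℝ) :
    HasSum (fun z : ℤ => ‖WithLp.toLp 2 fun i : Fin N => f (z * N + i)‖ ^ 2) (‖f‖ ^ 2) := by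
  have : NeZero N := ⟨hN.ne'⟩
  have hpairs := (Equiv.hasSum_iff (f := fun n => ‖f n‖ ^ 2) (Int.divModEquiv N).symm).2
    (hasSum_norm_sq f)
  refine hpairs.prod_fiberwise fun z => ?_
  rw [EuclideanSpace.norm_sq_eq]
  exact hasSum_fintype fun i : Fin N => ‖f (z * N + i)‖ ^ 2

lemma boxMatrix_mulVec_block {U : ℤ →ᵇ ℝ} (hU : Function.Periodic U N) (f : LTwo ℝ) (z : ℤ) :
    boxMatrix U N *ᵥ (fun i => f (z * N + i)) =
      fun i : Fin N => cutSchrodinger N U f (z * N + i) := by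
  ext i
  have hi := i.2
  have hper : U (z * N + i) = U i := by rw [add_comm]; exact hU.int_mul z i
  rw [cutSchrodinger_apply, hper, boxMatrix_mulVec U fun j => f (z * N + j)]
  have hleft : (i : ℤ) = 0 ↔ (N : ℤ) ∣ z * N + i := by
    rw [dvd_add_right (dvd_mul_left _ _)]
    exact ⟨fun h => h ▸ dvd_zero _, Int.eq_zero_of_dvd_of_nonneg_of_lt (by omega) (by omega)⟩
  have hright : (i + 1 : ℤ) = N ↔ (N : ℤ) ∣ z * N + i + 1 := by
    rw [add_assoc, dvd_add_right (dvd_mul_left _ _)]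
    exact ⟨fun h => h ▸ dvd_rfl, fun h => by have := Int.le_of_dvd (by omega) h; omega⟩
  simp only [if_congr hleft rfl rfl, if_congr hright rfl rfl, add_sub_assoc, add_assoc]

lemma exists_finset_cutSchrodinger (hN : 0 < N) {U : ℤ →ᵇ ℝ} (hU : Function.Periodic U N) :
    ∃ s : Finset ℝ, s.card ≤ N ∧ ∀ E r : ℝ, 0 ≤ r → (∀ μ ∈ s, r ≤ |E - μ|) →
      BoundedBelow (cutSchrodinger N (U - algebraMap ℝ _ E)) r := by
  obtain ⟨s, hs, hbelow⟩ := exists_finset_mul_norm_le_of_isSymmetric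
    (isSymmetric_toEuclideanLin_iff.2 (isHermitian_boxMatrix U N))
  refine ⟨s, hs.trans_eq finrank_euclideanSpace_fin, fun E r hr hE f => ?_⟩
  refine (pow_le_pow_iff_left₀ (by positivity) (norm_nonneg _) two_ne_zero).1 ?_
  rw [mul_pow]
  refine hasSum_le (fun z => ?_) ((hasSum_norm_sq_blocks hN f).mul_left (r ^ 2))
    (hasSum_norm_sq_blocks hN _)
  rw [← mul_pow]
  refine pow_le_pow_left₀ (by positivity) ((hbelow E r hr hE _).trans_eq (congrArg norm ?_)) 2
  rw [toLpLin_toLp, toLin'_apply, boxMatrix_mulVec_block hU]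
  ext i
  simp [cutSchrodinger_apply, sub_mul, add_sub_assoc]

/-- Where a potential with a gap shields the cuts, the spectrum of `H_U` stays exponentially close
to that of one Dirichlet box. -/
lemma exists_finset_boundedBelow_of_shielded {U : ℤ →ᵇ ℝ} {η : ℝ} {R : ℕ} (hN : 0 < N)
    (hU : Function.Periodic U N) (hη : 0 < η) :
    ∃ s : Finset ℝ, s.card ≤ N ∧ ∀ (U' : ℤ →ᵇ ℝ) (E : ℝ),
      BoundedBelow (schrodinger ℝ (U' - algebraMap ℝ _ E)) η →
      (∀ z n : ℤ, |n - z * N| ≤ R → U' n = U n) →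
      (∀ μ ∈ s, 5 * (1 + η / 4)⁻¹ ^ R ≤ |E - μ|) →
      BoundedBelow (schrodinger ℝ (U - algebraMap ℝ _ E)) ((1 + η / 4)⁻¹ ^ R / (1 + 4 / η)) := by
  obtain ⟨s, hs, hcut⟩ := exists_finset_cutSchrodinger hN hU
  refine ⟨s, hs, fun U' E hbelow hUU' hE f => ?_⟩
  have hexp : Real.exp (-(Real.log (1 + η / 4) * R)) = (1 + η / 4)⁻¹ ^ R := by
    rw [mul_comm, ← mul_neg, ← Real.log_inv, Real.exp_nat_mul, Real.exp_log (by positivity)]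
  have hbox := (hcut E _ (by positivity) hE f).trans (norm_cutSchrodinger_apply_le _ f)
  have hagree : ∀ a ∈ {n | (N : ℤ) ∣ n ∨ (N : ℤ) ∣ n + 1}, ∀ n : ℤ, dist n a < R → U' n = U n := by
    intro a ha n hna
    replace hna : |n - a| < R := by rw [Int.dist_eq] at hna; exact_mod_cast hna
    rw [abs_lt] at hna
    obtain ⟨z, hz⟩ | ⟨z, hz⟩ := ha <;>
    · refine hUU' z n (abs_le.2 ?_)
      rw [mul_comm, ← hz]
      omega
  have hdecay := norm_mulOp_siteIndicator_apply_le (U := U - algebraMap ℝ _ E) hη hbelow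
    ⟨0, Or.inl (dvd_zero _)⟩ (fun a ha n hna => congrArg (· - E) (hagree a ha n hna)) f
  rw [hexp] at hdecay
  rw [div_mul_eq_mul_div, div_le_iff₀ (by positivity)]
  linear_combination hbox + 2 * hdecay

end DirichletBoxes

/-! ### Gluing -/

section Gluing

variable {ι : Type*} [Fintype ι]

lemma exists_glue [Nonempty ι] {F : ι → ℤ →ᵇ ℝ} {N : ℕ} (hN : 0 < N)
    (hF : ∀ i, Function.Periodic (F i) N) (R : ℕ) :
    ∃ W : ℤ →ᵇ ℝ, Function.Periodic W (Fintype.card ι * (N * (2 * R + 1)) : ℕ) ∧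
      (∀ n, ∃ i, W n = F i n) ∧ ∀ i, ∃ a : ℤ, ∀ z n : ℤ,
        |n - (a + z * (Fintype.card ι * (N * (2 * R + 1)) : ℕ))| ≤ R → W n = F i n := by
  set q := Fintype.card ι
  set l := N * (2 * R + 1) with hl
  have hRl : 2 * R + 1 ≤ l := Nat.le_mul_of_pos_left _ hN
  have hl0 : (l : ℤ) ≠ 0 := by omega
  let e : ZMod q ≃ ι := Fintype.equivOfCardEq (ZMod.card q)
  let W : ℤ →ᵇ ℝ := ofNormedAddCommGroupDiscrete (fun n => F (e (n / l : ℤ)) n) (∑ i, ‖F i‖)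
    fun n => ((F _).norm_coe_le_norm n).trans
      (Finset.single_le_sum (fun i _ => norm_nonneg (F i)) (Finset.mem_univ _))
  refine ⟨W, fun n => ?_, fun n => ⟨_, rfl⟩, fun i => ⟨(e.symm i).val * l + R, fun z n hn => ?_⟩⟩
  · change F (e (_ / l : ℤ)) _ = F (e (n / l : ℤ)) n
    have hper : Function.Periodic (F (e (n / l : ℤ))) (q * l : ℕ) := by
      rw [hl, show q * (N * (2 * R + 1)) = q * (2 * R + 1) * N by ring, Nat.cast_mul]
      exact (hF _).nat_mul _
    rw [Nat.cast_mul, Int.add_mul_ediv_right _ _ hl0, Int.cast_add, Int.cast_natCast,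
      ZMod.natCast_self, add_zero, ← Nat.cast_mul, hper]
  · change F (e (n / l : ℤ)) n = F i n
    have hdiv : n / (l : ℤ) = (e.symm i).val + z * q := by
      rw [abs_le] at hn
      push_cast at hn
      rw [Int.ediv_eq_iff_of_pos (by omega)]
      constructor <;> nlinarith
    rw [hdiv]
    simp

lemma exists_finset_boundedBelow_of_glued {F : ι → ℤ →ᵇ ℝ} {W : ℤ →ᵇ ℝ} {k Q R : ℕ} {lam η : ℝ}
    (hk : 0 < k) (hQ : 0 < Q) (hη : 0 < η) (hW : Function.Periodic W Q)
    (hstretch : ∀ i, ∃ a : ℤ, ∀ z n : ℤ, |n - (a + z * Q)| ≤ R → W n = F i n)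
    (hF : ∀ E, ∃ i, BoundedBelow (schrodinger ℝ (shiftedRepeat (F i) (k, lam, E))) η) :
    ∃ s : Finset ℝ, s.card ≤ Fintype.card ι * (k * Q) ∧
      ∀ E, (∀ μ ∈ s, 5 * (1 + η / 4)⁻¹ ^ R ≤ |E - μ|) →
        BoundedBelow (schrodinger ℝ (shiftedRepeat W (k, lam, E)))
          ((1 + η / 4)⁻¹ ^ R / (1 + 4 / η)) := by
  choose a ha using hstretch
  have hper (i : ι) :
      Function.Periodic (translatePot (k * a i) (scaledRepeat lam k W)) (k * Q : ℕ) := by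
    intro n
    simp only [translatePot_apply, add_right_comm n]
    exact periodic_scaledRepeat hW lam hk.ne' _
  choose s hs hbelow using fun i =>
    exists_finset_boundedBelow_of_shielded (R := R) (Nat.mul_pos hk hQ) (hper i) hη
  refine ⟨Finset.univ.biUnion s,
    (Finset.card_biUnion_le_card_mul _ _ _ fun i _ => hs i).trans_eq (by rw [Finset.card_univ]),
    fun E hE => ?_⟩
  obtain ⟨i, hi⟩ := hF E
  have hshift := hbelow i (translatePot (k * a i) (scaledRepeat lam k (F i))) E
    (boundedBelow_schrodinger_translatePot hi (k * a i)) (fun z n hn => ?_)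
    fun μ hμ => hE μ (Finset.mem_biUnion.2 ⟨i, Finset.mem_univ i, hμ⟩)
  · convert boundedBelow_schrodinger_translatePot hshift (-(k * a i)) using 2
    ext n
    simp [shiftedRepeat]
  · have hk0 : (0 : ℤ) < k := by exact_mod_cast hk
    simp only [translatePot_apply, scaledRepeat_apply, Int.add_mul_ediv_left _ _ hk0.ne']
    rw [ha i z _]
    push_cast at hn
    have hblock : n / k + a i - (a i + z * Q) = (n - z * (k * Q)) / k := by
      rw [show n - z * (k * Q) = n + k * -(z * Q) by ring, Int.add_mul_ediv_left _ _ hk0.ne']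
      ring
    rw [hblock]
    exact abs_le.2 ⟨(Int.le_ediv_iff_mul_le hk0).2 (by nlinarith [(abs_le.1 hn).1]),
      Int.ediv_le_of_le_mul hk0 (by nlinarith [(abs_le.1 hn).2])⟩

/-- `S` is covered by finitely many intervals of radius `v ^ K`, where the total of the much larger
numbers `v` is at most `1 / K`. Covers of this kind for all large `K` make the Hausdorff dimension
vanish. -/
def HasThinCover (K : ℕ) (S : Set ℝ) : Prop :=
  ∃ v > 0, ∃ s : Finset ℝ, s.card * v ≤ (K : ℝ)⁻¹ ∧ ∀ E ∈ S, ∃ e ∈ s, |E - e| < v ^ K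

lemma HasThinCover.mono {K : ℕ} {S T : Set ℝ} (hT : HasThinCover K T) (hST : S ⊆ T) :
    HasThinCover K S :=
  let ⟨v, hv, s, hs, hcover⟩ := hT
  ⟨v, hv, s, hs, fun E hE => hcover E (hST hE)⟩

lemma exists_linear_mul_le_and_pow_le {γ : ℝ} (hγ : 0 < γ) (hγ1 : γ < 1) {K : ℕ} (hK : 0 < K)
    (A : ℕ) :
    ∃ R : ℕ, ∃ v > 0, A * (2 * R + 1) * v ≤ (K : ℝ)⁻¹ ∧ 5 * γ ^ R ≤ v ^ K := by
  let β : ℝ := γ ^ (K : ℝ)⁻¹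
  have hβ : 0 < β := Real.rpow_pos_of_pos hγ _
  have hβK : β ^ K = γ := Real.rpow_inv_natCast_pow hγ.le hK.ne'
  have hβ1 : β < 1 := Real.rpow_lt_one hγ.le hγ1 (by positivity)
  have hlim : Filter.Tendsto (fun R : ℕ => A * (2 * R + 1) * (5 * β ^ R)) Filter.atTop
      (nhds 0) := by
    have hlinear := (tendsto_self_mul_const_pow_of_lt_one hβ.le hβ1).const_mul (10 * A : ℝ)
    have hconst := (tendsto_pow_atTop_nhds_zero_of_lt_one hβ.le hβ1).const_mul (5 * A : ℝ)
    convert hlinear.add hconst using 2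
    · ring
    · ring
  obtain ⟨R, hR⟩ := (hlim.eventually_le_const (by positivity : 0 < (K : ℝ)⁻¹)).exists
  refine ⟨R, 5 * β ^ R, by positivity, hR, ?_⟩
  rw [mul_pow, pow_right_comm, hβK]
  gcongr
  exact le_self_pow₀ (by norm_num) hK.ne'

lemma exists_isPeriodicSeq_hasThinCover {V : ℤ →ᵇ ℝ} (hV : IsPeriodicSeq V) {ε : ℝ} (hε : 0 < ε)
    {K : ℕ} (hK : 0 < K) :
    ∃ W : ℤ →ᵇ ℝ, IsPeriodicSeq W ∧ ‖W - V‖ ≤ ε ∧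
      ∃ c > 0, ∀ lam ∈ couplings K, ∀ k, 0 < k → k ≤ K →
        HasThinCover K {E | ¬ BoundedBelow (schrodinger ℝ (shiftedRepeat W (k, lam, E))) c} := by
  obtain ⟨F, hF, hne, hFV, η, hη, hbelow⟩ := exists_finite_boundedBelow hV hε hK
  obtain ⟨N, hN, hper⟩ := exists_common_period hF fun W hW => (hFV W hW).1
  have : Fintype F := hF.fintype
  have : Nonempty F := hne.to_subtype
  let γ := (1 + η / 4)⁻¹
  have hγ : 0 < γ := by positivity
  have hγ1 : γ < 1 := inv_lt_one_of_one_lt₀ (by linarith)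
  obtain ⟨R, v, hv, hvK, hγv⟩ :=
    exists_linear_mul_le_and_pow_le hγ hγ1 hK (Fintype.card F * (K * (Fintype.card F * N)))
  obtain ⟨W, hW, hWF, hstretch⟩ := exists_glue (F := fun W : F => (W : ℤ →ᵇ ℝ)) hN
    (fun W => hper W W.2) R
  have hQ : 0 < Fintype.card F * (N * (2 * R + 1)) := by positivity
  refine ⟨W, ⟨_, hQ, hW⟩, (norm_le hε.le).2 fun n => ?_, γ ^ R / (1 + 4 / η), by positivity,
    fun lam hlam k hk hkK => ?_⟩
  · obtain ⟨i, hi⟩ := hWF n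
    rw [BoundedContinuousFunction.sub_apply, hi]
    exact ((i.1 - V).norm_coe_le_norm n).trans (hFV i i.2).2
  · obtain ⟨s, hs, hsW⟩ := exists_finset_boundedBelow_of_glued hk hQ hη hW hstretch fun E =>
      let ⟨W', hW', h⟩ := hbelow k hk hkK lam hlam E
      ⟨⟨W', hW'⟩, h⟩
    refine ⟨v, hv, s, le_trans ?_ hvK, fun E hE => ?_⟩
    · have hcard : s.card ≤ Fintype.card F * (K * (Fintype.card F * N)) * (2 * R + 1) :=
        calc s.card ≤ Fintype.card F * (K * (Fintype.card F * (N * (2 * R + 1)))) :=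
              hs.trans (by gcongr)
          _ = _ := by ring
      gcongr
      exact_mod_cast hcard
    · by_contra! hfar
      exact hE (hsW E fun e he => hγv.trans (hfar e he))

end Gluing

/-! ### Hausdorff dimension and the generic set -/

section Dimension

lemma HasThinCover.exists_isCover {K : ℕ} {S : Set ℝ} (h : HasThinCover K S) {d : ℝ}
    (hKd : 1 ≤ K * d) :
    ∃ (s : Finset ℝ) (r : ℝ), S ⊆ ⋃ e : s, Metric.closedBall (e : ℝ) r ∧
      (∀ e : s, Metric.ediam (Metric.closedBall (e : ℝ) r) ≤ ENNReal.ofReal (2 * (K : ℝ)⁻¹)) ∧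
      ∑ e : s, Metric.ediam (Metric.closedBall (e : ℝ) r) ^ d ≤ ENNReal.ofReal (2 ^ d) := by
  obtain ⟨v, hv, s, hs, hcover⟩ := h
  have hK : 1 ≤ K := Nat.one_le_iff_ne_zero.2 fun hK => by norm_num [hK] at hKd
  have hKinv : (K : ℝ)⁻¹ ≤ 1 := inv_le_one_of_one_le₀ (by exact_mod_cast hK)
  have hvK (e : s) : v ≤ (K : ℝ)⁻¹ := by
    have hcard : (1 : ℝ) ≤ s.card := by
      exact_mod_cast Nat.one_le_iff_ne_zero.2 (Finset.card_ne_zero_of_mem e.2)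
    exact (le_mul_of_one_le_left hv.le hcard).trans hs
  have hdiam (e : ℝ) :
      Metric.ediam (Metric.closedBall e (v ^ K)) = ENNReal.ofReal (2 * v ^ K) := by
    rw [Real.closedBall_eq_Icc, Real.ediam_Icc]
    ring_nf
  refine ⟨s, v ^ K, fun E hE => ?_, fun e => ?_, ?_⟩
  · obtain ⟨e, he, hEe⟩ := hcover E hE
    exact mem_iUnion.2 ⟨⟨e, he⟩, hEe.le⟩
  · rw [hdiam]
    gcongr
    exact (pow_le_of_le_one hv.le ((hvK e).trans hKinv) (by omega)).trans (hvK e)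
  · have hcost (e : s) : (2 * v ^ K) ^ d ≤ 2 ^ d * v := by
      rw [Real.mul_rpow two_pos.le (by positivity), ← Real.rpow_natCast, ← Real.rpow_mul hv.le]
      gcongr
      exact (Real.rpow_le_rpow_of_exponent_ge hv ((hvK e).trans hKinv) hKd).trans_eq
        (Real.rpow_one v)
    calc ∑ e : s, Metric.ediam (Metric.closedBall (e : ℝ) (v ^ K)) ^ d
        = ∑ _e : s, ENNReal.ofReal ((2 * v ^ K) ^ d) := by
          simp_rw [hdiam, ENNReal.ofReal_rpow_of_pos (show 0 < 2 * v ^ K by positivity)]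
      _ ≤ ∑ _e : s, ENNReal.ofReal (2 ^ d * v) :=
          Finset.sum_le_sum fun e _ => ENNReal.ofReal_le_ofReal (hcost e)
      _ = ENNReal.ofReal (2 ^ d * (s.card * v)) := by
          rw [Finset.sum_const, Finset.card_univ, Fintype.card_coe, nsmul_eq_mul,
            ← ENNReal.ofReal_natCast, ← ENNReal.ofReal_mul (by positivity), mul_left_comm]
      _ ≤ ENNReal.ofReal (2 ^ d) :=
          ENNReal.ofReal_le_ofReal (mul_le_of_le_one_right (by positivity) (hs.trans hKinv))

lemma dimH_eq_zero_of_hasThinCover {S : Set ℝ} (h : ∀ᶠ K in Filter.atTop, HasThinCover K S) :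
    dimH S = 0 := by
  refine le_antisymm (ENNReal.le_of_forall_pos_le_add fun d hd _ => ?_) bot_le
  have hd' : (0 : ℝ) < d := hd
  obtain ⟨N, hN⟩ := exists_nat_ge (d : ℝ)⁻¹
  have hcover : ∀ᶠ K : ℕ in Filter.atTop, HasThinCover K S ∧ 1 ≤ (K : ℝ) * d := by
    filter_upwards [h, Filter.eventually_ge_atTop N] with K hK hNK
    refine ⟨hK, ?_⟩
    rw [← inv_le_iff_one_le_mul₀ hd']
    exact hN.trans (by exact_mod_cast hNK)
  choose! s r hSr hdiam hsum using fun (K : ℕ) (hK : HasThinCover K S ∧ 1 ≤ (K : ℝ) * d) =>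
    hK.1.exists_isCover hK.2
  have hscale : Filter.Tendsto (fun K : ℕ => ENNReal.ofReal (2 * (K : ℝ)⁻¹)) Filter.atTop
      (nhds 0) := by
    have := ENNReal.tendsto_ofReal (tendsto_inv_atTop_nhds_zero_nat (𝕜 := ℝ) |>.const_mul 2)
    rwa [mul_zero, ENNReal.ofReal_zero] at this
  rw [zero_add]
  refine dimH_le_of_hausdorffMeasure_ne_top (ne_top_of_le_ne_top (ENNReal.ofReal_ne_top
    (r := 2 ^ (d : ℝ))) ?_)
  calc μH[d] S ≤ Filter.liminf
        (fun K => ∑ e : s K, Metric.ediam (Metric.closedBall (e : ℝ) (r K)) ^ (d : ℝ))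
        Filter.atTop :=
      Measure.hausdorffMeasure_le_liminf_sum d S _ hscale
        (fun K (e : s K) => Metric.closedBall (e : ℝ) (r K)) (hcover.mono hdiam)
        (hcover.mono hSr)
    _ ≤ ENNReal.ofReal (2 ^ (d : ℝ)) :=
      Filter.liminf_le_of_frequently_le' (hcover.mono hsum).frequently

end Dimension

section Generic

/-- The bounded potentials `V` for which the spectra of all `lam * V^{⊛k}` with `lam` in
`couplings K` and `1 ≤ k ≤ K` have thin covers of order `K`. -/
def Thin (K : ℕ) (V : ℤ →ᵇ ℝ) : Prop :=
  ∀ lam ∈ couplings K, ∀ k, 0 < k → k ≤ K →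
    HasThinCover K (SchrodingerSpectrum (scaledRepeat lam k V))

lemma norm_shiftedRepeat_sub_le (V W : ℤ →ᵇ ℝ) (p : ℕ × ℝ × ℝ) :
    ‖shiftedRepeat V p - shiftedRepeat W p‖ ≤ |p.2.1| * ‖V - W‖ := by
  rw [shiftedRepeat, shiftedRepeat, sub_sub_sub_cancel_right, ← map_sub]
  exact norm_scaledRepeat_le _ _ _

lemma exists_isPeriodicSeq_eventually_thin {V : ℤ →ᵇ ℝ} (hV : IsPeriodicSeq V) {ε : ℝ} (hε : 0 < ε)
    {K : ℕ} (hK : 0 < K) :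
    ∃ W : ℤ →ᵇ ℝ, IsPeriodicSeq W ∧ ‖W - V‖ ≤ ε ∧ ∀ᶠ V' in nhds W, Thin K V' := by
  obtain ⟨W, hW, hWV, c, hc, hthin⟩ := exists_isPeriodicSeq_hasThinCover hV hε hK
  refine ⟨W, hW, hWV, ?_⟩
  have hK' : (0 : ℝ) < K := by exact_mod_cast hK
  refine Filter.mem_of_superset (Metric.closedBall_mem_nhds W (by positivity : 0 < c / 2 / K))
    fun V' hV' lam hlam k hk hkK => ?_
  refine (hthin lam hlam k hk hkK).mono fun E hE hbelow => ?_
  have hclose : ‖shiftedRepeat W (k, lam, E) - shiftedRepeat V' (k, lam, E)‖ ≤ c / 2 := by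
    rw [Metric.mem_closedBall, dist_comm, dist_eq_norm] at hV'
    calc ‖shiftedRepeat W (k, lam, E) - shiftedRepeat V' (k, lam, E)‖
      _ ≤ |lam| * ‖W - V'‖ := norm_shiftedRepeat_sub_le _ _ _
      _ ≤ K * (c / 2 / K) := mul_le_mul hlam.2 hV' (norm_nonneg _) hK'.le
      _ = c / 2 := mul_div_cancel₀ _ hK'.ne'
  exact (notMem_schrodingerSpectrum_iff_exists_boundedBelow (𝕜 := ℝ) _ E).2
    ⟨c - c / 2, by linarith, hbelow.schrodinger_of_norm_sub_le hclose⟩ hE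

/-- The limit-periodic potentials that are `Thin K`. -/
def thinSet (K : ℕ) : Set LPZ := {V | Thin K V}

lemma dense_interior_thinSet {K : ℕ} (hK : 0 < K) : Dense (interior (thinSet K)) := by
  rw [Metric.dense_iff]
  intro V ε hε
  obtain ⟨V₀, hV₀, hVV₀⟩ := Metric.mem_closure_iff.1 V.2 (ε / 2) (half_pos hε)
  obtain ⟨W, hW, hWV₀, hthin⟩ :=
    exists_isPeriodicSeq_eventually_thin hV₀ (by positivity : 0 < ε / 2) hK
  refine ⟨⟨W, subset_closure hW⟩, ?_, mem_interior_iff_mem_nhds.2 ?_⟩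
  · change dist W V < ε
    rw [← dist_eq_norm] at hWV₀
    rw [dist_comm] at hVV₀
    linarith [dist_triangle W V₀ V]
  · exact continuous_subtype_val.continuousAt.eventually hthin

lemma scaledRepeat_mem_LPZ {V : ℤ →ᵇ ℝ} (hV : V ∈ LPZ) (lam : ℝ) {k : ℕ} (hk : 0 < k) :
    scaledRepeat lam k V ∈ LPZ := by
  have hcont : Continuous (scaledRepeat lam k) :=
    AddMonoidHomClass.continuous_of_bound (scaledRepeat lam k) |lam| (norm_scaledRepeat_le lam k)
  refine map_mem_closure hcont hV ?_
  rintro W ⟨N, hN, hW⟩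
  exact ⟨k * N, Nat.mul_pos hk hN, periodic_scaledRepeat hW lam hk.ne'⟩

lemma eventually_mem_couplings {lam : ℝ} (hlam : lam ≠ 0) :
    ∀ᶠ K : ℕ in Filter.atTop, lam ∈ couplings K := by
  have hlam' : 0 < |lam| := abs_pos.2 hlam
  exact (tendsto_inv_atTop_nhds_zero_nat.eventually_le_const hlam').and
    (tendsto_natCast_atTop_atTop.eventually_ge_atTop |lam|)

lemma isZeroDimCantor_of_thin {V : ℤ →ᵇ ℝ} (hV : V ∈ LPZ) (hthin : ∀ K : ℕ, Thin (K + 1) V)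
    {lam : ℝ} (hlam : lam ≠ 0) {k : ℕ} (hk : 0 < k) :
    IsZeroDimCantor (SchrodingerSpectrum (scaledRepeat lam k V)) := by
  have hdim : dimH (SchrodingerSpectrum (scaledRepeat lam k V)) = 0 := by
    refine dimH_eq_zero_of_hasThinCover ?_
    filter_upwards [eventually_mem_couplings hlam, Filter.eventually_ge_atTop k] with K hK hkK
    obtain ⟨K, rfl⟩ := Nat.exists_eq_succ_of_ne_zero (hk.trans_le hkK).ne'
    exact hthin K lam hK k hk hkK
  refine ⟨schrodingerSpectrum_nonempty _, isCompact_schrodingerSpectrum _,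
    preperfect_schrodingerSpectrum fun ε hε =>
      exists_norm_translatePot_sub_le (scaledRepeat_mem_LPZ hV lam hk) hε,
    not_nonempty_iff_eq_empty.1 fun hne => ?_, hdim⟩
  have := Real.dimH_of_nonempty_interior hne
  rw [hdim, Module.finrank_self, Nat.cast_one] at this
  exact zero_ne_one this

end Generic

/-- For generic limit-periodic `V : ℤ → ℝ`, the spectrum of `H_{λ V^{⊛k}}` is a
Cantor set of zero Hausdorff dimension for every `λ ≠ 0` and every `k ∈ ℕ`. -/
theorem repeat_generic_zero_dim_cantor :
    ∃ R : Set LPZ, IsGδ R ∧ Dense R ∧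
      ∀ V ∈ R, ∀ lam : ℝ, lam ≠ 0 → ∀ k : ℕ, 0 < k →
        IsZeroDimCantor
          (SchrodingerSpectrum (fun n => lam * repeatPot (⇑(V : ℤ →ᵇ ℝ)) k n)) := by
  have hcl : IsClosed LPZ := isClosed_closure
  have : CompleteSpace LPZ := hcl.completeSpace_coe
  refine ⟨⋂ K : ℕ, interior (thinSet (K + 1)),
    IsGδ.iInter_of_isOpen fun _ => isOpen_interior,
    dense_iInter_of_isOpen (fun _ => isOpen_interior)
      fun K => dense_interior_thinSet K.succ_pos,
    fun V hV lam hlam k hk => ?_⟩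
  have hthin : ∀ K : ℕ, V ∈ thinSet (K + 1) := fun K => interior_subset (mem_iInter.1 hV K)
  rw [← coe_scaledRepeat]
  exact isZeroDimCantor_of_thin V.2 hthin hlam hk
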